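/- Rigidity of comparable homogeneous global minimizers: assume {U₀ > 0} is connected. If V is a positively 1-homogeneous global minimizer of J (V(t x) = t V(x) for t > 0) with V(x) ≥ U₀(x) for all x, then V = U₀. Likewise, if V is a positively 1-homogeneous global minimizer with 0 ≤ V ≤ U₀ and V not identically zero, then V = U₀. -/

import Mathlib

open MeasureTheory Metric Set Filter ENNReal NNReal

/-- The Alt–Caffarelli energy `J_D(u) = ∫_D (‖∇u‖² + 𝟙_{u>0})`, valued in `[0,∞]`. -/
noncomputable def JE {n : ℕ} (D : Set (EuclideanSpace ℝ (Fin n)))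
    (u : EuclideanSpace ℝ (Fin n) → ℝ) : ℝ≥0∞ :=
  ∫⁻ x in D, ((‖gradient u x‖₊ : ℝ≥0∞) ^ 2 + if 0 < u x then 1 else 0)

/-- `u` is a (nonnegative, locally Lipschitz) minimizer of `J` in the open set `Ω`:
for every nonnegative locally Lipschitz competitor `v` with `{v ≠ u}` a bounded subset
of `Ω`, one has `J_{Ω ∩ B}(u) ≤ J_{Ω ∩ B}(v)` for every open ball `B ⊇ {v ≠ u}`. -/
def IsMinimizer {n : ℕ} (Ω : Set (EuclideanSpace ℝ (Fin n)))
    (u : EuclideanSpace ℝ (Fin n) → ℝ) : Prop :=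
  (∀ x, 0 ≤ u x) ∧ LocallyLipschitz u ∧
  ∀ v : EuclideanSpace ℝ (Fin n) → ℝ, (∀ x, 0 ≤ v x) → LocallyLipschitz v →
    Bornology.IsBounded {x | v x ≠ u x} → {x | v x ≠ u x} ⊆ Ω →
    ∀ (c : EuclideanSpace ℝ (Fin n)) (r : ℝ), {x | v x ≠ u x} ⊆ Metric.ball c r →
      JE (Ω ∩ Metric.ball c r) u ≤ JE (Ω ∩ Metric.ball c r) v

section rg_all


open MeasureTheory Metric Set Filter ENNReal NNReal

/-- Dirichlet version of the Wirtinger inequality, with a slightly smaller constant. -/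
lemma rg_wirtinger_aux (k : ℝ → ℝ) (K : ℝ≥0) (hk : LipschitzWith K k)
    (h1 : k (-(Real.pi / 2)) = 0) (h2 : k (Real.pi / 2) = 0) (l : ℝ) (hl0 : 0 < l) (hl1 : l < 1) :
    l ^ 2 * ∫ s in (-(Real.pi / 2))..(Real.pi / 2), k s ^ 2
      ≤ ∫ s in (-(Real.pi / 2))..(Real.pi / 2), deriv k s ^ 2 := by
  have hpi := Real.pi_pos
  have hle : -(Real.pi / 2) ≤ Real.pi / 2 := by linarith
  have hcos : ∀ s ∈ Icc (-(Real.pi / 2)) (Real.pi / 2), Real.cos (l * s) ≠ 0 := by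
    intro s hs
    apply ne_of_gt
    apply Real.cos_pos_of_mem_Ioo
    constructor <;> nlinarith [hs.1, hs.2]
  have hTd : ∀ s ∈ Icc (-(Real.pi / 2)) (Real.pi / 2),
      HasDerivAt (fun s => l * Real.tan (l * s)) (l ^ 2 + (l * Real.tan (l * s)) ^ 2) s := by
    intro s hs
    have h := hcos s hs
    have := ((Real.hasDerivAt_tan h).comp s ((hasDerivAt_id s).const_mul l)).const_mul l
    convert! this using 1
    rw [Real.tan_eq_sin_div_cos]
    field_simp
    have := Real.sin_sq_add_cos_sq (l * s)
    linear_combination this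
  have hTac : AbsolutelyContinuousOnInterval (fun s => l * Real.tan (l * s))
      (-(Real.pi / 2)) (Real.pi / 2) := by
    apply ContDiffOn.absolutelyContinuousOnInterval
    rw [uIcc_of_le hle]
    intro s hs
    apply ContDiffAt.contDiffWithinAt
    apply contDiffAt_const.mul
    exact (Real.contDiffAt_tan.2 (hcos s hs)).comp s (contDiffAt_const.mul contDiffAt_id)
  have hkac : AbsolutelyContinuousOnInterval k (-(Real.pi / 2)) (Real.pi / 2) :=
    (hk.lipschitzOnWith).absolutelyContinuousOnInterval
  have hP := (hkac.fun_mul hkac).fun_mul hTac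
  have hFTC := hP.integral_deriv_eq_sub
  simp only [h1, h2, mul_zero, zero_mul, sub_zero] at hFTC
  have hdk : ∀ᵐ s, DifferentiableAt ℝ k s := hk.ae_differentiableAt
  have hdkb : ∀ s, ‖deriv k s‖ ≤ K := fun s => norm_deriv_le_of_lipschitz hk
  have hi1 : IntervalIntegrable (fun s => deriv k s ^ 2) volume (-(Real.pi / 2)) (Real.pi / 2) := by
    refine IntervalIntegrable.mono_fun (intervalIntegrable_const (c := (K:ℝ)^2))
      ((measurable_deriv k).pow_const 2).aestronglyMeasurable (Eventually.of_forall fun s => ?_)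
    simp only [norm_pow, NNReal.norm_eq]
    gcongr; exact hdkb s
  have hi2 : IntervalIntegrable (fun s => k s ^ 2) volume (-(Real.pi / 2)) (Real.pi / 2) :=
    (hk.continuous.pow 2).intervalIntegrable _ _
  have hi3 := hP.intervalIntegrable_deriv
  have : ∫ s in (-(Real.pi / 2))..(Real.pi / 2), l ^ 2 * k s ^ 2
      ≤ ∫ s in (-(Real.pi / 2))..(Real.pi / 2), (deriv k s ^ 2 +
        deriv (fun s => k s * k s * (l * Real.tan (l * s))) s) := by
    apply intervalIntegral.integral_mono_ae_restrict hle (hi2.const_mul _) (hi1.add hi3)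
    filter_upwards [ae_restrict_of_ae hdk, ae_restrict_mem measurableSet_Icc] with s hs hsm
    have hd := (hs.hasDerivAt.mul hs.hasDerivAt).mul (hTd s hsm)
    have hd' : deriv (fun s => k s * k s * (l * Real.tan (l * s))) s = _ := hd.deriv
    simp only [hd', Pi.mul_apply]
    nlinarith [sq_nonneg (deriv k s + k s * (l * Real.tan (l * s)))]
  rw [intervalIntegral.integral_add hi1 hi3, hFTC, intervalIntegral.integral_const_mul] at this
  linarith

/-- the Wirtinger inequality for antiperiodic Lipschitz functions. -/
lemma rg_wirtinger (h : ℝ → ℝ) (K : ℝ≥0) (hh : LipschitzWith K h)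
    (ha : ∀ θ, h (θ + Real.pi) = - h θ) :
    ∫ s in (0:ℝ)..Real.pi, h s ^ 2 ≤ ∫ s in (0:ℝ)..Real.pi, deriv h s ^ 2 := by
  have hpi := Real.pi_pos
  obtain ⟨a, ha0⟩ : ∃ a, h a = 0 := by
    have h0 := ha 0
    rw [zero_add] at h0
    rcases le_total (h 0) 0 with hc | hc
    · have := intermediate_value_univ 0 Real.pi hh.continuous
      exact this ⟨hc, by linarith⟩
    · have := intermediate_value_univ Real.pi 0 hh.continuous
      exact this ⟨by linarith, hc⟩
  have hda : ∀ θ, deriv h (θ + Real.pi) = - deriv h θ := by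
    intro θ
    rw [← deriv_comp_add_const]
    simp only [ha]
    exact deriv.fun_neg
  have p1 : Function.Periodic (fun s => h s ^ 2) Real.pi := by intro s; simp [ha]
  have p2 : Function.Periodic (fun s => deriv h s ^ 2) Real.pi := by intro s; simp [hda]
  have e1 := p1.intervalIntegral_add_eq 0 a
  have e2 := p2.intervalIntegral_add_eq 0 a
  rw [zero_add] at e1 e2
  rw [e1, e2]
  set k : ℝ → ℝ := fun s => h (s + (a + Real.pi / 2)) with hk
  have hkL : LipschitzWith K k := by
    intro x y
    have := hh (x + (a + Real.pi / 2)) (y + (a + Real.pi / 2))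
    simpa using this
  have hkd : ∀ s, deriv k s = deriv h (s + (a + Real.pi / 2)) := fun s =>
    deriv_comp_add_const h (a + Real.pi/2) s
  have f1 : ∫ s in (-(Real.pi / 2))..(Real.pi / 2), k s ^ 2 = ∫ s in a..(a + Real.pi), h s ^ 2 := by
    simp only [hk]
    rw [intervalIntegral.integral_comp_add_right (fun s => h s ^ 2)]
    congr 1 <;> ring
  have f2 : ∫ s in (-(Real.pi / 2))..(Real.pi / 2), deriv k s ^ 2
      = ∫ s in a..(a + Real.pi), deriv h s ^ 2 := by
    simp only [hkd]
    rw [intervalIntegral.integral_comp_add_right (fun s => deriv h s ^ 2)]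
    congr 1 <;> ring
  rw [← f1, ← f2]
  have key := rg_wirtinger_aux k K hkL (by simp only [hk]; rw [← ha0]; congr 1; ring)
    (by simp only [hk]; rw [show Real.pi / 2 + (a + Real.pi/2) = a + Real.pi by ring, ha, ha0, neg_zero])
  have hlim : Tendsto (fun l : ℝ => l ^ 2 * ∫ s in (-(Real.pi / 2))..(Real.pi / 2), k s ^ 2)
      (nhdsWithin 1 (Iio 1)) (nhds (1 ^ 2 * ∫ s in (-(Real.pi / 2))..(Real.pi / 2), k s ^ 2)) := by
    apply Tendsto.mono_left _ nhdsWithin_le_nhds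
    exact (Continuous.tendsto (by fun_prop) 1)
  rw [one_pow, one_mul] at hlim
  refine le_of_tendsto hlim ?_
  filter_upwards [Ioo_mem_nhdsLT (show (0:ℝ) < 1 by norm_num)] with l hl
  exact key l hl.1 hl.2


open MeasureTheory Metric Set Filter ENNReal NNReal ProbabilityTheory

/-- Euclidean space abbreviation. -/
abbrev En (n : ℕ) := EuclideanSpace ℝ (Fin n)

section grad
variable {n : ℕ}

lemma rg_measurable_gradient (f : En n → ℝ) : Measurable (gradient f) :=
  (InnerProductSpace.toDual ℝ (En n)).symm.continuous.measurable.comp (measurable_fderiv ℝ f)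

lemma rg_norm_gradient (f : En n → ℝ) (x : En n) : ‖gradient f x‖ = ‖fderiv ℝ f x‖ := by
  rw [← toDual_gradient, LinearIsometryEquiv.norm_map]

lemma rg_norm_gradient_le {f : En n → ℝ} {K : ℝ≥0} (hf : LipschitzWith K f) (x : En n) :
    ‖gradient f x‖ ≤ K := by
  rw [rg_norm_gradient]; exact norm_fderiv_le_of_lipschitz ℝ hf

lemma rg_inner_gradient (f : En n → ℝ) (x y : En n) : inner ℝ (gradient f x) y = fderiv ℝ f x y :=
  inner_gradient_left

/-- density of the standard Gaussian -/
lemma rg_gauss_density : ∃ C : ℝ, 0 < C ∧ stdGaussian (En n) =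
    (volume : Measure (En n)).withDensity
      (fun x => ENNReal.ofReal (C * Real.exp (-‖x‖ ^ 2 / 2))) := by
  have hb : 0 < ((1 / 2 : ℝ) : ℂ).re := by simp
  have hgint : Integrable (fun x : En n => Real.exp (-‖x‖ ^ 2 / 2)) := by
    have := GaussianFourier.integrable_cexp_neg_mul_sq_norm_add (V := En n) hb 0 0
    have := this.norm
    refine this.congr (Eventually.of_forall fun x => ?_)
    simp [Complex.norm_exp]
    have h1 : ((‖x‖:ℂ) ^ 2).re = ‖x‖ ^ 2 := by norm_cast
    rw [h1]; ring
  have hI := GaussianFourier.integral_rexp_neg_mul_sq_norm (V := En n) (b := 1/2) (by norm_num)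
  set I : ℝ := (Real.pi / (1/2)) ^ (Module.finrank ℝ (En n) / 2 : ℝ) with hIdef
  have hIpos : 0 < I := by have := Real.pi_pos; positivity
  have hI' : ∫ x : En n, Real.exp (-‖x‖ ^ 2 / 2) = I := by
    rw [← hI]; congr 1; ext x; congr 1; ring
  refine ⟨I⁻¹, by positivity, ?_⟩
  have hgint2 : Integrable (fun x : En n => I⁻¹ * Real.exp (-‖x‖ ^ 2 / 2)) := hgint.const_mul _
  have hfin : IsFiniteMeasure ((volume : Measure (En n)).withDensity
      (fun x => ENNReal.ofReal (I⁻¹ * Real.exp (-‖x‖ ^ 2 / 2)))) :=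
    isFiniteMeasure_withDensity_ofReal hgint2.2
  apply Measure.ext_of_charFun
  ext t
  rw [charFun_stdGaussian, charFun_apply]
  rw [integral_withDensity_eq_integral_toReal_smul (by fun_prop) (by simp)]
  have key := GaussianFourier.integral_cexp_neg_mul_sq_norm_add (V := En n) hb Complex.I t
  have hIc : ((Real.pi : ℂ) / ((1/2 : ℝ) : ℂ)) ^ (Module.finrank ℝ (En n) / 2 : ℂ) = (I : ℂ) := by
    rw [hIdef, Complex.ofReal_cpow (by have := Real.pi_pos; positivity)]
    push_cast; rfl
  rw [hIc] at key
  have : ∀ x : En n, (ENNReal.ofReal (I⁻¹ * Real.exp (-‖x‖ ^ 2 / 2))).toReal •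
      Complex.exp ((inner ℝ x t : ℝ) * Complex.I) = (I⁻¹ : ℂ) *
      Complex.exp (-((1/2 : ℝ) : ℂ) * ‖x‖ ^ 2 + Complex.I * (inner ℝ t x : ℝ)) := by
    intro x
    rw [ENNReal.toReal_ofReal (by positivity), real_inner_comm, Complex.exp_add]
    rw [Complex.real_smul]
    push_cast
    rw [mul_comm (Complex.I)]
    have : (-(‖x‖:ℂ) ^ 2 / 2) = -(1/2) * (‖x‖:ℂ)^2 := by ring
    rw [this]; ring
  simp_rw [this]
  rw [integral_const_mul, key]
  have hIne : (I:ℂ) ≠ 0 := by exact_mod_cast hIpos.ne'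
  rw [← mul_assoc, inv_mul_cancel₀ hIne, one_mul]
  congr 1
  rw [Complex.I_sq]; push_cast; ring

lemma rg_gauss_ac : stdGaussian (En n) ≪ (volume : Measure (En n)) := by
  obtain ⟨C, hC, h⟩ := rg_gauss_density (n := n)
  rw [h]; exact withDensity_absolutelyContinuous _ _

lemma rg_ac_gauss : (volume : Measure (En n)) ≪ stdGaussian (En n) := by
  obtain ⟨C, hC, h⟩ := rg_gauss_density (n := n)
  rw [h]; refine withDensity_absolutelyContinuous' (by fun_prop) ?_
  refine Eventually.of_forall fun x => ?_
  have : 0 < C * Real.exp (-‖x‖ ^ 2 / 2) := by positivity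
  simp [this]

lemma rg_gauss_integral : ∃ C : ℝ, 0 < C ∧ ∀ F : En n → ℝ, ∫ x, F x ∂(stdGaussian (En n)) =
    C * ∫ x, F x * Real.exp (-‖x‖ ^ 2 / 2) := by
  obtain ⟨C, hC, h⟩ := rg_gauss_density (n := n)
  refine ⟨C, hC, fun F => ?_⟩
  rw [h, integral_withDensity_eq_integral_toReal_smul (by fun_prop) (by simp),
    ← integral_const_mul]
  congr 1; ext x
  rw [ENNReal.toReal_ofReal (by positivity), smul_eq_mul]; ring

lemma rg_rot (θ : ℝ) : MeasurePreserving (ContinuousLinearMap.rotation (E := En n) θ)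
    ((stdGaussian (En n)).prod (stdGaussian (En n)))
    ((stdGaussian (En n)).prod (stdGaussian (En n))) :=
  ⟨by fun_prop, IsGaussian.map_rotation_eq_self (by simp) θ⟩

lemma rg_second_moment (a : En n) :
    ∫⁻ z, ENNReal.ofReal ((inner ℝ a z) ^ 2) ∂(stdGaussian (En n)) = ENNReal.ofReal (‖a‖ ^ 2) := by
  have hv := variance_dual_stdGaussian (innerSL ℝ a : StrongDual ℝ (En n))
  have hm := integral_strongDual_stdGaussian (innerSL ℝ a : StrongDual ℝ (En n))
  have hL : MemLp (innerSL ℝ a : En n → ℝ) 2 (stdGaussian (En n)) :=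
    IsGaussian.memLp_dual _ _ _ (by simp)
  rw [variance_of_integral_eq_zero (by fun_prop) hm] at hv
  rw [innerSL_apply_norm] at hv
  rw [← hv, ofReal_integral_eq_lintegral_ofReal]
  · simp
  · simpa using hL.integrable_sq
  · exact Eventually.of_forall fun x => sq_nonneg _
end grad


open MeasureTheory Metric Set Filter ENNReal NNReal ProbabilityTheory

section poincare
variable {n : ℕ}

lemma rg_path_lip (z z' : En n) : ∃ K : ℝ≥0,
    LipschitzWith K (fun θ : ℝ => (ContinuousLinearMap.rotation θ (z, z')).1) := by
  refine ⟨‖z‖₊ + ‖z'‖₊, ?_⟩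
  apply lipschitzWith_of_nnnorm_deriv_le (𝕜 := ℝ)
  · simp only [ContinuousLinearMap.rotation_apply]
    fun_prop
  · intro θ
    have : HasDerivAt (fun θ : ℝ => (ContinuousLinearMap.rotation θ (z, z')).1)
        (-Real.sin θ • z + Real.cos θ • z') θ := by
      simp only [ContinuousLinearMap.rotation_apply]
      exact ((Real.hasDerivAt_cos θ).smul_const z).add ((Real.hasDerivAt_sin θ).smul_const z')
    rw [this.deriv, ← NNReal.coe_le_coe]
    push_cast
    refine (norm_add_le _ _).trans ?_
    rw [norm_smul, norm_smul, norm_neg]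
    have h1 : ‖Real.sin θ‖ ≤ 1 := Real.abs_sin_le_one θ
    have h2 : ‖Real.cos θ‖ ≤ 1 := Real.abs_cos_le_one θ
    nlinarith [norm_nonneg z, norm_nonneg z']

lemma rg_odd_path (g : En n → ℝ) (K : ℝ≥0) (hg : LipschitzWith K g) (hodd : ∀ z, g (-z) = - g z)
    (p : En n × En n)
    (hp : ∀ᵐ θ ∂(volume.restrict (Ioc 0 Real.pi)),
      DifferentiableAt ℝ g (ContinuousLinearMap.rotation θ p).1) :
    ∫⁻ θ in Ioc 0 Real.pi, ENNReal.ofReal (g (ContinuousLinearMap.rotation θ p).1 ^ 2)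
    ≤ ∫⁻ θ in Ioc 0 Real.pi, ENNReal.ofReal
      (inner ℝ (gradient g (ContinuousLinearMap.rotation θ p).1)
        (ContinuousLinearMap.rotation θ p).2 ^ 2) := by
  obtain ⟨z, z'⟩ := p
  set h : ℝ → ℝ := fun θ => g (ContinuousLinearMap.rotation θ (z, z')).1 with hh
  obtain ⟨L, hL⟩ := rg_path_lip z z'
  have hlip : LipschitzWith (K * L) h := hg.comp hL
  have hanti : ∀ θ, h (θ + Real.pi) = - h θ := by
    intro θ
    simp only [hh]
    rw [← hodd]
    congr 1
    simp only [ContinuousLinearMap.rotation_apply, Real.cos_add_pi, Real.sin_add_pi, neg_smul]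
    abel
  have hd : ∀ᵐ θ ∂(volume.restrict (Ioc 0 Real.pi)), deriv h θ =
      inner ℝ (gradient g (ContinuousLinearMap.rotation θ (z, z')).1)
        (ContinuousLinearMap.rotation θ (z, z')).2 := by
    filter_upwards [hp] with θ hθ
    have h1 : HasDerivAt (fun θ : ℝ => (ContinuousLinearMap.rotation θ (z, z')).1)
        (-Real.sin θ • z + Real.cos θ • z') θ := by
      simp only [ContinuousLinearMap.rotation_apply]
      exact ((Real.hasDerivAt_cos θ).smul_const z).add ((Real.hasDerivAt_sin θ).smul_const z')
    have h2 := hθ.hasFDerivAt.comp_hasDerivAt θ h1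
    have h3 : deriv h θ = _ := h2.deriv
    rw [h3, rg_inner_gradient]
    rfl
  have hdb : ∀ s, ‖deriv h s‖ ≤ (K * L : ℝ≥0) := fun s => norm_deriv_le_of_lipschitz hlip
  have hi1 : IntegrableOn (fun s => deriv h s ^ 2) (Ioc 0 Real.pi) := by
    refine Integrable.mono' (integrable_const (((K * L : ℝ≥0) : ℝ) ^ 2))
      ((measurable_deriv h).pow_const 2).aestronglyMeasurable (Eventually.of_forall fun s => ?_)
    simp only [norm_pow]
    gcongr; exact hdb s
  have hi2 : IntegrableOn (fun s => h s ^ 2) (Ioc 0 Real.pi) :=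
    ((hlip.continuous.pow 2).integrableOn_Icc).mono_set Ioc_subset_Icc_self
  have hW := rg_wirtinger h _ hlip hanti
  rw [intervalIntegral.integral_of_le Real.pi_pos.le,
    intervalIntegral.integral_of_le Real.pi_pos.le] at hW
  have e : ∫⁻ θ in Ioc 0 Real.pi, ENNReal.ofReal
      (inner ℝ (gradient g (ContinuousLinearMap.rotation θ (z, z')).1)
        (ContinuousLinearMap.rotation θ (z, z')).2 ^ 2) =
      ∫⁻ θ in Ioc 0 Real.pi, ENNReal.ofReal (deriv h θ ^ 2) := by
    apply lintegral_congr_ae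
    filter_upwards [hd] with θ hθ
    rw [hθ]
  rw [e, ← ofReal_integral_eq_lintegral_ofReal hi1 (Eventually.of_forall fun x => sq_nonneg _),
    ← ofReal_integral_eq_lintegral_ofReal hi2 (Eventually.of_forall fun x => sq_nonneg _)]
  exact ENNReal.ofReal_le_ofReal hW

lemma rg_ae_diff {f : En n → ℝ} {K : ℝ≥0} (hf : LipschitzWith K f) :
    ∀ᵐ x ∂(stdGaussian (En n)), DifferentiableAt ℝ f x :=
  rg_gauss_ac.ae_le hf.ae_differentiableAt

lemma rg_meas_F (g : En n → ℝ) : Measurable (fun p : En n × En n =>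
    ENNReal.ofReal (inner ℝ (gradient g p.1) p.2 ^ 2)) := by
  have h1 : Measurable (fun p : En n × En n => gradient g p.1) :=
    (rg_measurable_gradient g).comp measurable_fst
  exact ((h1.inner measurable_snd).pow_const 2).ennreal_ofReal

lemma rg_odd_poincare (g : En n → ℝ) (K : ℝ≥0) (hg : LipschitzWith K g)
    (hodd : ∀ z, g (-z) = - g z) :
    ∫⁻ z, ENNReal.ofReal (g z ^ 2) ∂(stdGaussian (En n))
    ≤ ∫⁻ z, ENNReal.ofReal (‖gradient g z‖ ^ 2) ∂(stdGaussian (En n)) := by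
  set μ := stdGaussian (En n) with hμ
  have hgc := hg.continuous
  have hG := rg_meas_F g
  have hH : Measurable (fun p : En n × En n => ENNReal.ofReal (g p.1 ^ 2)) :=
    ((hg.continuous.comp continuous_fst).pow 2).measurable.ennreal_ofReal
  have hR : ∫⁻ z, ENNReal.ofReal (‖gradient g z‖ ^ 2) ∂μ =
      ∫⁻ p, ENNReal.ofReal (inner ℝ (gradient g p.1) p.2 ^ 2) ∂(μ.prod μ) := by
    rw [lintegral_prod _ hG.aemeasurable]
    simp only [hμ, rg_second_moment]
  have hLp : ∫⁻ z, ENNReal.ofReal (g z ^ 2) ∂μ =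
      ∫⁻ p, ENNReal.ofReal (g p.1 ^ 2) ∂(μ.prod μ) := by
    rw [lintegral_prod _ hH.aemeasurable]
    simp
  rw [hR, hLp]
  have avg : ∀ F : En n × En n → ℝ≥0∞, Measurable F →
      ∫⁻ p, (∫⁻ θ in Ioc 0 Real.pi, F (ContinuousLinearMap.rotation θ p)) ∂(μ.prod μ) =
        (∫⁻ p, F p ∂(μ.prod μ)) * ENNReal.ofReal Real.pi := by
    intro F hF
    rw [lintegral_lintegral_swap]
    · have : ∀ θ : ℝ, ∫⁻ p, F (ContinuousLinearMap.rotation θ p) ∂(μ.prod μ) =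
          ∫⁻ p, F p ∂(μ.prod μ) := fun θ => (rg_rot θ).lintegral_comp hF
      simp only [this]
      simp
    · have hrm' : Measurable (fun q : (En n × En n) × ℝ =>
          ContinuousLinearMap.rotation q.2 q.1) := by
        simp only [ContinuousLinearMap.rotation_apply]
        apply Continuous.measurable
        fun_prop
      exact (hF.comp hrm').aemeasurable
  have hpi : ENNReal.ofReal Real.pi ≠ 0 := by simp [Real.pi_pos]
  rw [← ENNReal.mul_le_mul_iff_left hpi (by simp), ← avg _ hG, ← avg _ hH]
  apply lintegral_mono_ae
  have hae : ∀ᵐ p ∂(μ.prod μ), ∀ᵐ θ ∂(volume.restrict (Ioc 0 Real.pi)),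
      DifferentiableAt ℝ g (ContinuousLinearMap.rotation θ p).1 := by
    rw [Measure.ae_ae_comm]
    · refine Eventually.of_forall fun θ => ?_
      have h1 : ∀ᵐ p ∂(μ.prod μ), DifferentiableAt ℝ g p.1 :=
        Measure.quasiMeasurePreserving_fst.ae (rg_ae_diff hg)
      exact (rg_rot θ).quasiMeasurePreserving.ae h1
    · have hφ : Measurable (fun q : (En n × En n) × ℝ =>
          (ContinuousLinearMap.rotation q.2 q.1).1) := by
        simp only [ContinuousLinearMap.rotation_apply]
        apply Continuous.measurable
        fun_prop
      exact hφ (measurableSet_of_differentiableAt ℝ g)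
  filter_upwards [hae] with p hp
  exact rg_odd_path g K hg hodd p hp

end poincare


open MeasureTheory Metric Set Filter ENNReal NNReal ProbabilityTheory

section poincare2
variable {n : ℕ}

lemma rg_poincare_aux (f : En n → ℝ) (K : ℝ≥0) (hf : LipschitzWith K f) :
    ∫⁻ p, ENNReal.ofReal ((f p.2 - f p.1) ^ 2) ∂((stdGaussian (En n)).prod (stdGaussian (En n)))
    ≤ ∫⁻ p, ENNReal.ofReal ((1/2) * ‖gradient f p.2 + gradient f p.1‖ ^ 2)
      ∂((stdGaussian (En n)).prod (stdGaussian (En n))) := by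
  set μ := stdGaussian (En n) with hμ
  set c : ℝ := Real.sqrt 2 / 2 with hc
  have hc2 : c ^ 2 = 1 / 2 := by
    rw [hc, div_pow, Real.sq_sqrt (by norm_num)]; norm_num
  have hrot : ∀ p : En n × En n, ContinuousLinearMap.rotation (-(Real.pi / 4)) p =
      (c • p.1 - c • p.2, c • p.1 + c • p.2) := by
    intro p
    rw [ContinuousLinearMap.rotation_apply, Real.cos_neg, Real.sin_neg, Real.cos_pi_div_four,
      Real.sin_pi_div_four, neg_neg, neg_smul, sub_eq_add_neg]
  have hmp := rg_rot (n := n) (-(Real.pi / 4))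
  have hm1 : Measurable (fun p : En n × En n => ENNReal.ofReal ((f p.2 - f p.1) ^ 2)) :=
    (((hf.continuous.comp continuous_snd).sub
      (hf.continuous.comp continuous_fst)).pow 2).measurable.ennreal_ofReal
  have hga : Measurable (fun p : En n × En n => gradient f p.1) :=
    (rg_measurable_gradient f).comp measurable_fst
  have hgb : Measurable (fun p : En n × En n => gradient f p.2) :=
    (rg_measurable_gradient f).comp measurable_snd
  have hm2 : Measurable (fun p : En n × En n =>
      ENNReal.ofReal ((1/2) * ‖gradient f p.2 + gradient f p.1‖ ^ 2)) :=
    (((hgb.add hga).norm.pow_const 2).const_mul _).ennreal_ofReal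
  rw [← hmp.lintegral_comp hm1, ← hmp.lintegral_comp hm2]
  have hm1' : Measurable (fun p : En n × En n => ENNReal.ofReal
      ((f (ContinuousLinearMap.rotation (-(Real.pi / 4)) p).2
        - f (ContinuousLinearMap.rotation (-(Real.pi / 4)) p).1) ^ 2)) := hm1.comp hmp.measurable
  have hm2' : Measurable (fun p : En n × En n => ENNReal.ofReal
      ((1/2) * ‖gradient f (ContinuousLinearMap.rotation (-(Real.pi / 4)) p).2
        + gradient f (ContinuousLinearMap.rotation (-(Real.pi / 4)) p).1‖ ^ 2)) :=
    hm2.comp hmp.measurable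
  rw [lintegral_prod _ hm1'.aemeasurable, lintegral_prod _ hm2'.aemeasurable]
  have hd : ∀ᵐ p ∂(μ.prod μ), DifferentiableAt ℝ f (c • p.1 - c • p.2) ∧
      DifferentiableAt ℝ f (c • p.1 + c • p.2) := by
    have h1 : ∀ᵐ p ∂(μ.prod μ), DifferentiableAt ℝ f p.1 :=
      Measure.quasiMeasurePreserving_fst.ae (rg_ae_diff hf)
    have h2 : ∀ᵐ p ∂(μ.prod μ), DifferentiableAt ℝ f p.2 :=
      Measure.quasiMeasurePreserving_snd.ae (rg_ae_diff hf)
    have h3 := hmp.quasiMeasurePreserving.ae (h1.and h2)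
    simpa only [hrot] using h3
  have hd' := Measure.ae_ae_of_ae_prod hd
  apply lintegral_mono_ae
  filter_upwards [hd'] with w hw
  simp only [hrot]
  set g : En n → ℝ := fun z => f (c • w + c • z) - f (c • w - c • z) with hg
  have hgl : ∃ L, LipschitzWith L g := by
    have l1 : LipschitzWith (0 + ‖c‖₊) (fun z : En n => c • w + c • z) :=
      (LipschitzWith.const (c • w)).add (lipschitzWith_smul c)
    have l2 : LipschitzWith (0 + ‖c‖₊) (fun z : En n => c • w - c • z) :=
      (LipschitzWith.const (c • w)).sub (lipschitzWith_smul c)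
    exact ⟨_, (hf.comp l1).sub (hf.comp l2)⟩
  obtain ⟨L, hL⟩ := hgl
  have hodd : ∀ z, g (-z) = - g z := by
    intro z; simp only [hg, smul_neg, sub_neg_eq_add, ← sub_eq_add_neg]; ring
  refine (rg_odd_poincare g L hL hodd).trans (le_of_eq ?_)
  apply lintegral_congr_ae
  filter_upwards [hw] with z hz
  congr 1
  have e1 : HasFDerivAt (fun z : En n => c • w + c • z) (c • ContinuousLinearMap.id ℝ (En n)) z :=
    ((hasFDerivAt_id z).const_smul c).const_add _
  have e2 : HasFDerivAt (fun z : En n => c • w - c • z) (-(c • ContinuousLinearMap.id ℝ (En n))) z :=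
    ((hasFDerivAt_id z).const_smul c).const_sub _
  have e3 := (hz.2.hasFDerivAt.comp z e1).sub (hz.1.hasFDerivAt.comp z e2)
  have e4 : fderiv ℝ g z = _ := e3.fderiv
  have e5 : gradient g z = c • (gradient f (c • w + c • z) + gradient f (c • w - c • z)) := by
    apply ext_inner_right ℝ
    intro v
    rw [rg_inner_gradient, e4, inner_smul_left, inner_add_left, rg_inner_gradient,
      rg_inner_gradient]
    simp
    ring
  rw [e5, norm_smul, mul_pow, Real.norm_eq_abs, sq_abs, hc2]

lemma rg_lip_memLp {f : En n → ℝ} {K : ℝ≥0} (hf : LipschitzWith K f) :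
    MemLp f 2 (stdGaussian (En n)) := by
  have h0 : MemLp (fun x : En n => ‖x‖) 2 (stdGaussian (En n)) :=
    (IsGaussian.memLp_two_id (μ := stdGaussian (En n))).norm
  have h0' : MemLp (fun x : En n => (K : ℝ) * ‖x‖) 2 (stdGaussian (En n)) := h0.const_mul (K : ℝ)
  have h0c : MemLp (fun _ : En n => ‖f 0‖) 2 (stdGaussian (En n)) := memLp_const _
  have h1 : MemLp (fun x : En n => ‖f 0‖ + K * ‖x‖) 2 (stdGaussian (En n)) := h0c.add h0'
  refine h1.mono' hf.continuous.aestronglyMeasurable (Eventually.of_forall fun x => ?_)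
  have := hf.norm_sub_le x 0
  rw [sub_zero] at this
  calc ‖f x‖ = ‖f 0 + (f x - f 0)‖ := by congr 1; ring
    _ ≤ _ := (norm_add_le _ _).trans (by gcongr)

lemma rg_grad_memLp {f : En n → ℝ} {K : ℝ≥0} (hf : LipschitzWith K f) :
    MemLp (gradient f) 2 (stdGaussian (En n)) :=
  MemLp.of_bound (rg_measurable_gradient f).aestronglyMeasurable K
    (Eventually.of_forall fun x => rg_norm_gradient_le hf x)

lemma rg_poincare_rigid_aux (f : En n → ℝ) (K : ℝ≥0) (hf : LipschitzWith K f)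
    (hmean : ∫ x, f x ∂(stdGaussian (En n)) = 0)
    (hle : ∫ x, ‖gradient f x‖ ^ 2 ∂(stdGaussian (En n)) ≤ ∫ x, f x ^ 2 ∂(stdGaussian (En n))) :
    ∃ a : En n, ∀ᵐ x ∂(stdGaussian (En n)), gradient f x = a := by
  have key := rg_poincare_aux f K hf
  set μ := stdGaussian (En n) with hμ
  have m1 : MemLp (fun p : En n × En n => f p.1) 2 (μ.prod μ) :=
    (rg_lip_memLp hf).comp_measurePreserving measurePreserving_fst
  have m2 : MemLp (fun p : En n × En n => f p.2) 2 (μ.prod μ) :=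
    (rg_lip_memLp hf).comp_measurePreserving measurePreserving_snd
  have g1 : MemLp (fun p : En n × En n => gradient f p.1) 2 (μ.prod μ) :=
    (rg_grad_memLp hf).comp_measurePreserving measurePreserving_fst
  have g2 : MemLp (fun p : En n × En n => gradient f p.2) 2 (μ.prod μ) :=
    (rg_grad_memLp hf).comp_measurePreserving measurePreserving_snd
  have i1 := (m2.sub m1).integrable_sq
  have i2 := ((memLp_two_iff_integrable_sq_norm (g2.add g1).1).1 (g2.add g1)).const_mul (1/2)
  have i3 := (memLp_two_iff_integrable_sq_norm (g2.sub g1).1).1 (g2.sub g1)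
  have i4 := (memLp_two_iff_integrable_sq_norm g1.1).1 g1
  have i5 := (memLp_two_iff_integrable_sq_norm g2.1).1 g2
  simp only [Pi.sub_apply, Pi.add_apply] at i1 i2 i3
  rw [← ofReal_integral_eq_lintegral_ofReal i1 (Eventually.of_forall fun x => sq_nonneg _),
    ← ofReal_integral_eq_lintegral_ofReal i2 (Eventually.of_forall fun x => by positivity)] at key
  rw [ENNReal.ofReal_le_ofReal_iff (integral_nonneg fun x => by positivity)] at key
  have fst_int : ∀ F : En n → ℝ, ∫ p : En n × En n, F p.1 ∂(μ.prod μ) = ∫ x, F x ∂μ := by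
    intro F; rw [integral_fun_fst]; simp
  have snd_int : ∀ F : En n → ℝ, ∫ p : En n × En n, F p.2 ∂(μ.prod μ) = ∫ x, F x ∂μ := by
    intro F; rw [integral_fun_snd]; simp
  have L : ∫ p : En n × En n, (f p.2 - f p.1) ^ 2 ∂(μ.prod μ) = 2 * ∫ x, f x ^ 2 ∂μ := by
    have : ∀ p : En n × En n, (f p.2 - f p.1) ^ 2 = f p.1 ^ 2 + f p.2 ^ 2 - 2 * (f p.1 * f p.2) := by
      intro p; ring
    simp_rw [this]
    have s1 : Integrable (fun p : En n × En n => f p.1 ^ 2 + f p.2 ^ 2) (μ.prod μ) :=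
      m1.integrable_sq.add m2.integrable_sq
    have s2 : Integrable (fun p : En n × En n => 2 * (f p.1 * f p.2)) (μ.prod μ) :=
      (m1.integrable_mul m2).const_mul 2
    rw [integral_sub s1 s2, integral_add m1.integrable_sq m2.integrable_sq,
      integral_const_mul, integral_prod_mul, hmean, fst_int (fun x => f x ^ 2),
      snd_int (fun x => f x ^ 2)]
    ring
  have R : ∫ p : En n × En n, 1 / 2 * ‖gradient f p.2 + gradient f p.1‖ ^ 2 ∂(μ.prod μ) =
      2 * ∫ x, ‖gradient f x‖ ^ 2 ∂μ -
      1 / 2 * ∫ p : En n × En n, ‖gradient f p.2 - gradient f p.1‖ ^ 2 ∂(μ.prod μ) := by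
    have : ∀ p : En n × En n, 1 / 2 * ‖gradient f p.2 + gradient f p.1‖ ^ 2 =
        ‖gradient f p.1‖ ^ 2 + ‖gradient f p.2‖ ^ 2 -
          1 / 2 * ‖gradient f p.2 - gradient f p.1‖ ^ 2 := by
      intro p
      have := parallelogram_law_with_norm ℝ (gradient f p.2) (gradient f p.1)
      linarith
    simp_rw [this]
    have s1 : Integrable (fun p : En n × En n => ‖gradient f p.1‖ ^ 2 + ‖gradient f p.2‖ ^ 2)
      (μ.prod μ) := i4.add i5
    rw [integral_sub s1 (i3.const_mul _), integral_add i4 i5, integral_const_mul,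
      fst_int (fun x => ‖gradient f x‖ ^ 2), snd_int (fun x => ‖gradient f x‖ ^ 2)]
    ring
  rw [L, R] at key
  have hz : ∫ p : En n × En n, ‖gradient f p.2 - gradient f p.1‖ ^ 2 ∂(μ.prod μ) = 0 := by
    apply le_antisymm _ (integral_nonneg fun p => by positivity)
    linarith
  rw [integral_eq_zero_iff_of_nonneg (fun p => by positivity) i3] at hz
  have hz' : ∀ᵐ p ∂(μ.prod μ), gradient f p.2 = gradient f p.1 := by
    filter_upwards [hz] with p hp
    simpa [sub_eq_zero] using hp
  obtain ⟨x, hx⟩ := (Measure.ae_ae_of_ae_prod hz').exists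
  exact ⟨gradient f x, hx⟩

lemma rg_affine (f : En n → ℝ) (K : ℝ≥0) (hf : LipschitzWith K f) (a : En n)
    (h : ∀ᵐ x, gradient f x = a) : ∀ x, f x = f 0 + inner ℝ a x := by
  have hg : ∀ v : En n, ∀ᵐ x, f (x + v) = f x + inner ℝ a v := by
    intro v
    have hgood : ∀ᵐ y, DifferentiableAt ℝ f y ∧ gradient f y = a := hf.ae_differentiableAt.and h
    have hms : MeasurableSet {y : En n | DifferentiableAt ℝ f y ∧ gradient f y = a} :=
      (measurableSet_of_differentiableAt ℝ f).inter
        (rg_measurable_gradient f (measurableSet_singleton a))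
    have hae : ∀ᵐ x : En n, ∀ᵐ s : ℝ,
        DifferentiableAt ℝ f (x + s • v) ∧ gradient f (x + s • v) = a := by
      rw [Measure.ae_ae_comm]
      · refine Eventually.of_forall fun s => ?_
        exact (measurePreserving_add_right volume (s • v)).quasiMeasurePreserving.ae hgood
      · have hφ : Measurable (fun q : En n × ℝ => q.1 + q.2 • v) := by
          apply Continuous.measurable; fun_prop
        exact hφ hms
    filter_upwards [hae] with x hx
    have hl : LipschitzWith (K * (0 + ‖v‖₊)) (fun s : ℝ => f (x + s • v)) := by
      refine hf.comp ((LipschitzWith.const x).add ?_)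
      apply LipschitzWith.of_dist_le_mul
      intro s t
      rw [dist_eq_norm, dist_eq_norm, ← sub_smul, norm_smul, mul_comm]
      rfl
    have hac : AbsolutelyContinuousOnInterval (fun s : ℝ => f (x + s • v)) 0 1 :=
      hl.lipschitzOnWith.absolutelyContinuousOnInterval
    have := hac.integral_deriv_eq_sub
    have e : ∫ s in (0:ℝ)..1, deriv (fun s : ℝ => f (x + s • v)) s
        = ∫ s in (0:ℝ)..1, (inner ℝ a v : ℝ) := by
      apply intervalIntegral.integral_congr_ae
      filter_upwards [hx] with s hs _
      have h1 : HasDerivAt (fun s : ℝ => x + s • v) v s := by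
        simpa using ((hasDerivAt_id s).smul_const v).const_add x
      have h2 := hs.1.hasFDerivAt.comp_hasDerivAt s h1
      have h3 : deriv (fun s : ℝ => f (x + s • v)) s = _ := h2.deriv
      rw [h3, ← rg_inner_gradient, hs.2]
    rw [e] at this
    simp at this
    linarith
  intro v
  have hv := hg v
  have hc : (fun x => f (x + v)) = fun x => f x + inner ℝ a v := by
    apply Continuous.ae_eq_iff_eq volume _ _ |>.1 hv
    · exact hf.continuous.comp (by fun_prop)
    · exact hf.continuous.add continuous_const
  have := congrFun hc 0
  simpa using this

lemma rg_poincare_rigid (f : En n → ℝ) (K : ℝ≥0) (hf : LipschitzWith K f)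
    (hmean : ∫ x, f x ∂(stdGaussian (En n)) = 0)
    (hle : ∫ x, ‖gradient f x‖ ^ 2 ∂(stdGaussian (En n)) ≤ ∫ x, f x ^ 2 ∂(stdGaussian (En n))) :
    ∃ a : En n, ∀ x, f x = f 0 + inner ℝ a x := by
  obtain ⟨a, ha⟩ := rg_poincare_rigid_aux f K hf hmean hle
  exact ⟨a, rg_affine f K hf a (rg_ac_gauss.ae_le ha)⟩

end poincare2


open MeasureTheory Metric Set Filter ENNReal NNReal ProbabilityTheory

section basics
variable {n : ℕ}

lemma rg_hom_zero {u : En n → ℝ} (hom : ∀ t : ℝ, 0 < t → ∀ x, u (t • x) = t * u x) : u 0 = 0 := by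
  have := hom 2 (by norm_num) 0
  rw [smul_zero] at this; linarith

lemma rg_hom_lip {u : En n → ℝ} (hl : LocallyLipschitz u)
    (hom : ∀ t : ℝ, 0 < t → ∀ x, u (t • x) = t * u x) : ∃ K, LipschitzWith K u := by
  obtain ⟨K, t, ht, hK⟩ := hl 0
  obtain ⟨r, hr, hrt⟩ := Metric.mem_nhds_iff.1 ht
  refine ⟨K, LipschitzWith.of_dist_le_mul fun x y => ?_⟩
  set s : ℝ := r / (‖x‖ + ‖y‖ + 1) with hs
  have hpos : 0 < ‖x‖ + ‖y‖ + 1 := by positivity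
  have hs0 : 0 < s := by positivity
  have hmem : ∀ z : En n, ‖z‖ ≤ ‖x‖ + ‖y‖ → s • z ∈ t := by
    intro z hz
    apply hrt
    rw [mem_ball_zero_iff, norm_smul, Real.norm_eq_abs, abs_of_pos hs0, hs, div_mul_eq_mul_div,
      div_lt_iff₀ hpos]
    nlinarith
  have h := hK.dist_le_mul (s • x) (hmem x (by linarith [norm_nonneg y])) (s • y)
    (hmem y (by linarith [norm_nonneg x]))
  rw [hom s hs0, hom s hs0, dist_smul₀, Real.dist_eq, ← mul_sub, abs_mul, Real.norm_eq_abs,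
    abs_of_pos hs0] at h
  rw [Real.dist_eq]
  have : s * |u x - u y| ≤ s * (K * dist x y) := by linarith
  exact le_of_mul_le_mul_left this hs0

lemma rg_euler {u : En n → ℝ} (hom : ∀ t : ℝ, 0 < t → ∀ x, u (t • x) = t * u x) (x : En n)
    (hd : DifferentiableAt ℝ u x) : inner ℝ (gradient u x) x = u x := by
  rw [rg_inner_gradient]
  have h1 : HasDerivAt (fun t : ℝ => t • x) x 1 := by
    simpa using (hasDerivAt_id (1 : ℝ)).smul_const x
  have h2 : HasFDerivAt u (fderiv ℝ u x) ((fun t : ℝ => t • x) 1) := by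
    simpa using hd.hasFDerivAt
  have h3 := h2.comp_hasDerivAt (1 : ℝ) h1
  have h4 : HasDerivAt (fun t : ℝ => t * u x) (u x) 1 := by
    simpa using (hasDerivAt_id (1 : ℝ)).mul_const (u x)
  refine h3.unique (h4.congr_of_eventuallyEq ?_)
  filter_upwards [eventually_gt_nhds (zero_lt_one (α := ℝ))] with t ht
  exact hom t ht x

lemma rg_grad_sq_int {v : En n → ℝ} {L : ℝ≥0} (hv : LipschitzWith L v) (R : ℝ) :
    IntegrableOn (fun x => ‖gradient v x‖ ^ 2) (ball 0 R) := by
  apply Measure.integrableOn_of_bounded (M := (L : ℝ) ^ 2) measure_ball_lt_top.ne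
    ((rg_measurable_gradient v).norm.pow_const 2).aestronglyMeasurable
  refine Eventually.of_forall fun x => ?_
  rw [norm_pow, norm_norm]
  exact pow_le_pow_left₀ (norm_nonneg _) (rg_norm_gradient_le hv x) 2

lemma rg_inner_int {v w : En n → ℝ} {L M : ℝ≥0} (hv : LipschitzWith L v) (hw : LipschitzWith M w)
    (R : ℝ) :
    IntegrableOn (fun x => inner ℝ (gradient v x) (gradient w x)) (ball 0 R) := by
  apply Measure.integrableOn_of_bounded (M := (L : ℝ) * M) measure_ball_lt_top.ne
    ((rg_measurable_gradient v).inner (rg_measurable_gradient w)).aestronglyMeasurable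
  refine Eventually.of_forall fun x => ?_
  exact (norm_inner_le_norm _ _).trans (mul_le_mul (rg_norm_gradient_le hv x)
    (rg_norm_gradient_le hw x) (norm_nonneg _) L.2)

lemma rg_ball_fin (R : ℝ) (s : Set (En n)) : volume (ball (0 : En n) R ∩ s) ≠ ⊤ :=
  ((measure_mono inter_subset_left).trans_lt measure_ball_lt_top).ne

lemma rg_JE {v : En n → ℝ} {L : ℝ≥0} (hv : LipschitzWith L v) (R : ℝ) :
    JE (univ ∩ ball 0 R) v = ENNReal.ofReal
      ((∫ x in ball 0 R, ‖gradient v x‖ ^ 2) + volume.real (ball 0 R ∩ {x | 0 < v x})) := by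
  have hms : MeasurableSet {x | 0 < v x} := (isOpen_lt continuous_const hv.continuous).measurableSet
  rw [univ_inter, JE, lintegral_add_left
    ((rg_measurable_gradient v).nnnorm.coe_nnreal_ennreal.pow_const 2),
    ENNReal.ofReal_add (integral_nonneg fun x => by positivity) measureReal_nonneg]
  congr 1
  · rw [ofReal_integral_eq_lintegral_ofReal (rg_grad_sq_int hv R)
      (Eventually.of_forall fun x => by positivity)]
    refine lintegral_congr fun x => ?_
    rw [ENNReal.ofReal_pow (norm_nonneg _), ofReal_norm]
    rfl
  · have : (fun x => if 0 < v x then (1 : ℝ≥0∞) else 0) = indicator {x | 0 < v x} 1 := by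
      ext x; simp [indicator]
    rw [this, lintegral_indicator_one hms, Measure.restrict_apply hms, inter_comm, measureReal_def,
      ENNReal.ofReal_toReal]
    exact rg_ball_fin R _

lemma rg_min {V v : En n → ℝ} {K L : ℝ≥0} (hV : IsMinimizer univ V) (hVl : LipschitzWith K V)
    (hv : LipschitzWith L v) (hv0 : ∀ x, 0 ≤ v x) (R : ℝ) (hR : ∀ x, x ∉ ball (0 : En n) R → v x = V x) :
    (∫ x in ball 0 R, ‖gradient V x‖ ^ 2) + volume.real (ball 0 R ∩ {x | 0 < V x}) ≤
    (∫ x in ball 0 R, ‖gradient v x‖ ^ 2) + volume.real (ball 0 R ∩ {x | 0 < v x}) := by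
  have hs : {x | v x ≠ V x} ⊆ ball 0 R := fun x hx => by
    by_contra h; exact hx (hR x h)
  have := hV.2.2 v hv0 hv.locallyLipschitz (isBounded_ball.subset hs) (subset_univ _) 0 R hs
  rw [rg_JE hVl, rg_JE hv] at this
  rwa [ENNReal.ofReal_le_ofReal_iff] at this
  exact add_nonneg (integral_nonneg fun x => by positivity) measureReal_nonneg

lemma rg_firstvar {V φ : En n → ℝ} {K L : ℝ≥0} (hV : IsMinimizer univ V) (hVl : LipschitzWith K V)
    (hφ : LipschitzWith L φ) (R : ℝ) (hR : ∀ x, x ∉ ball (0 : En n) R → φ x = 0) (δ : ℝ) (hδ : 0 < δ)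
    (h0 : ∀ t, 0 < t → t < δ → ∀ x, 0 ≤ V x + t * φ x)
    (hP : ∀ t, 0 < t → t < δ → volume.real (ball 0 R ∩ {x | 0 < V x + t * φ x}) ≤
      volume.real (ball 0 R ∩ {x | 0 < V x})) :
    0 ≤ ∫ x in ball 0 R, inner ℝ (gradient V x) (gradient φ x) := by
  set I := ∫ x in ball 0 R, inner ℝ (gradient V x) (gradient φ x) with hI
  set Q := ∫ x in ball 0 R, ‖gradient φ x‖ ^ 2 with hQ
  have key : ∀ t, 0 < t → t < δ → 0 ≤ 2 * I + t * Q := by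
    intro t ht htd
    have hl : LipschitzWith (K + ‖t‖₊ * L) (fun x => V x + t * φ x) :=
      hVl.add ((lipschitzWith_smul t).comp hφ)
    have h1 := rg_min hV hVl hl (h0 t ht htd) R (fun x hx => by rw [hR x hx]; ring)
    have h2 := hP t ht htd
    have h3 : ∫ x in ball 0 R, ‖gradient (fun x => V x + t * φ x) x‖ ^ 2 =
        (∫ x in ball 0 R, ‖gradient V x‖ ^ 2) + 2 * t * I + t ^ 2 * Q := by
      rw [hI, hQ, ← integral_const_mul, ← integral_const_mul, ← integral_add (rg_grad_sq_int hVl R)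
        ((rg_inner_int hVl hφ R).const_mul _), ← integral_add]
      rotate_left
      · exact (rg_grad_sq_int hVl R).add ((rg_inner_int hVl hφ R).const_mul _)
      · exact (rg_grad_sq_int hφ R).const_mul _
      apply integral_congr_ae
      apply ae_restrict_of_ae
      filter_upwards [hVl.ae_differentiableAt, hφ.ae_differentiableAt] with x hx1 hx2
      have e : gradient (fun x => V x + t * φ x) x = gradient V x + t • gradient φ x := by
        apply ext_inner_right ℝ
        intro w
        have hs : HasFDerivAt (fun x => V x + t * φ x) (fderiv ℝ V x + t • fderiv ℝ φ x) x :=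
          hx1.hasFDerivAt.add (hx2.hasFDerivAt.const_mul t)
        rw [rg_inner_gradient, inner_add_left, inner_smul_left, rg_inner_gradient,
          rg_inner_gradient, hs.fderiv]
        simp
      rw [e, norm_add_sq_real, inner_smul_right, norm_smul, mul_pow, Real.norm_eq_abs, sq_abs]
      ring
    have h4 : 0 ≤ t * (2 * I + t * Q) := by nlinarith
    exact nonneg_of_mul_nonneg_right h4 ht
  by_contra hneg
  push Not at hneg
  have hQ0 : 0 ≤ Q := integral_nonneg fun x => by positivity
  set t := min (δ / 2) (-I / (Q + 1)) with ht
  have ht0 : 0 < t := lt_min (by positivity) (div_pos (by linarith) (by linarith))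
  have ht1 : t < δ := (min_le_left _ _).trans_lt (by linarith)
  have ht2 : t * (Q + 1) ≤ -I := by
    rw [← le_div_iff₀ (by linarith)]; exact min_le_right _ _
  have := key t ht0 ht1
  nlinarith

lemma rg_EL {V φ : En n → ℝ} {K L : ℝ≥0} (hV : IsMinimizer univ V) (hVl : LipschitzWith K V)
    (hφ : LipschitzWith L φ) (R : ℝ) (hR : ∀ x, x ∉ ball (0 : En n) R → φ x = 0) (C : ℝ) (hC : 0 ≤ C)
    (hb : ∀ x, |φ x| ≤ C * V x) :
    ∫ x in ball 0 R, inner ℝ (gradient V x) (gradient φ x) = 0 := by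
  have main : ∀ φ : En n → ℝ, LipschitzWith L φ → (∀ x, x ∉ ball (0 : En n) R → φ x = 0) →
      (∀ x, |φ x| ≤ C * V x) → 0 ≤ ∫ x in ball 0 R, inner ℝ (gradient V x) (gradient φ x) := by
    intro φ hφ hR hb
    have hlow : ∀ t, 0 < t → t < 1 / (C + 1) → ∀ x, (1 - t * C) * V x ≤ V x + t * φ x := by
      intro t ht htd x
      have := (abs_le.1 (hb x)).1
      nlinarith
    have hcoef : ∀ t, 0 < t → t < 1 / (C + 1) → 0 < 1 - t * C := by
      intro t ht htd
      rw [lt_div_iff₀ (by linarith)] at htd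
      nlinarith
    refine rg_firstvar hV hVl hφ R hR (1 / (C + 1)) (by positivity) ?_ ?_
    · intro t ht htd x
      exact (mul_nonneg (hcoef t ht htd).le (hV.1 x)).trans (hlow t ht htd x)
    · intro t ht htd
      apply measureReal_mono _ (rg_ball_fin R _)
      rintro x ⟨hx, hx2⟩
      refine ⟨hx, ?_⟩
      rcases (hV.1 x).lt_or_eq with h | h
      · exact h
      · exfalso
        have h3 := hb x
        rw [← h, mul_zero] at h3
        have h4 : φ x = 0 := abs_eq_zero.1 (le_antisymm h3 (abs_nonneg _))
        simp only [mem_ofPred_eq, ← h, h4] at hx2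
        linarith
  apply le_antisymm _ (main φ hφ hR hb)
  have h1 := main (fun x => - φ x) hφ.neg (fun x hx => by simp [hR x hx]) (fun x => by
    rw [abs_neg]; exact hb x)
  have h2 : ∀ x, inner ℝ (gradient V x) (gradient (fun x => - φ x) x) =
      - inner ℝ (gradient V x) (gradient φ x) := by
    intro x
    rw [real_inner_comm, rg_inner_gradient, real_inner_comm (gradient φ x), rg_inner_gradient]
    rw [show (fun x => - φ x) = -φ from rfl, fderiv_neg]
    rfl
  simp_rw [h2] at h1
  rw [integral_neg] at h1
  linarith
end basics


open MeasureTheory Metric Set Filter ENNReal NNReal ProbabilityTheory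

section cutoff
variable {n : ℕ}

/-- The Gaussian weight. -/
noncomputable def rgg (x : En n) : ℝ := Real.exp (-‖x‖ ^ 2 / 4)

/-- The truncated Gaussian weight. -/
noncomputable def rgm (ε : ℝ) (x : En n) : ℝ := max (rgg x - ε) 0

lemma rgg_pos (x : En n) : 0 < rgg x := Real.exp_pos _

lemma rgg_norm_le (x : En n) : rgg x * ‖x‖ ≤ 1 := by
  have h1 : ‖x‖ ≤ Real.exp (‖x‖ ^ 2 / 4) := by
    have := Real.add_one_le_exp (‖x‖ ^ 2 / 4)
    nlinarith [sq_nonneg (‖x‖ / 2 - 1)]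
  have h2 : rgg x * Real.exp (‖x‖ ^ 2 / 4) = 1 := by
    rw [rgg, ← Real.exp_add]; ring_nf; simp
  calc rgg x * ‖x‖ ≤ rgg x * Real.exp (‖x‖ ^ 2 / 4) := by
        gcongr; exact (rgg_pos x).le
    _ = 1 := h2

lemma rgg_le_one (x : En n) : rgg x ≤ 1 := by
  rw [rgg, Real.exp_le_one_iff]; have := sq_nonneg ‖x‖; linarith

lemma rgm_nonneg (ε : ℝ) (x : En n) : 0 ≤ rgm ε x := le_max_right _ _

lemma rgm_le (ε : ℝ) (hε : 0 < ε) (x : En n) : rgm ε x ≤ rgg x :=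
  max_le (by linarith) (rgg_pos x).le

lemma rgg_cont : Continuous (rgg : En n → ℝ) := by unfold rgg; fun_prop

lemma rgm_cont (ε : ℝ) : Continuous (rgm ε : En n → ℝ) :=
  (rgg_cont.sub continuous_const).max continuous_const

lemma rgm_zero (ε : ℝ) (hε : 0 < ε) (x : En n) (hx : x ∉ ball (0 : En n) (1 / ε)) :
    rgm ε x = 0 := by
  rw [mem_ball_zero_iff, not_lt, div_le_iff₀ hε] at hx
  have h1 := rgg_norm_le x
  apply max_eq_right
  have h2 := rgg_pos x
  have hpos : 0 < ‖x‖ := by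
    rcases (norm_nonneg x).lt_or_eq with h | h
    · exact h
    · rw [← h] at hx; linarith
  by_contra hc
  push Not at hc
  nlinarith

lemma rg_sqmax_deriv (s : ℝ) : HasDerivAt (fun s : ℝ => (max s 0) ^ 2) (2 * max s 0) s := by
  rcases lt_trichotomy s 0 with h | h | h
  · rw [max_eq_right h.le, mul_zero]
    refine (hasDerivAt_const s (0 : ℝ)).congr_of_eventuallyEq ?_
    filter_upwards [eventually_lt_nhds h] with t ht
    rw [max_eq_right ht.le]; norm_num
  · subst h
    rw [hasDerivAt_iff_isLittleO_nhds_zero]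
    have : (fun h : ℝ => h ^ 2) =o[nhds 0] fun h => h := by
      simpa using Asymptotics.isLittleO_pow_id (𝕜 := ℝ) (n := 2) (by norm_num)
    refine Asymptotics.IsBigO.trans_isLittleO ?_ this
    apply Asymptotics.IsBigO.of_bound 1
    refine Eventually.of_forall fun x => ?_
    simp only [zero_add, max_self, mul_zero, smul_zero, sub_zero]
    rw [one_mul]
    norm_num
    rw [sq_le_sq]
    rcases le_total x 0 with h | h
    · rw [max_eq_right h]; simp
    · rw [max_eq_left h]
  · rw [max_eq_left h.le]
    have h0 : HasDerivAt (fun s : ℝ => s ^ 2) (2 * s) s := by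
      simpa using hasDerivAt_pow 2 s
    refine h0.congr_of_eventuallyEq ?_
    filter_upwards [eventually_gt_nhds h] with t ht
    rw [max_eq_left ht.le]

lemma rg_psi_hasFDerivAt (ε : ℝ) (x : En n) :
    HasFDerivAt (fun x : En n => rgm ε x ^ 2) (-(rgm ε x * rgg x) • innerSL ℝ x) x := by
  have h1 : HasFDerivAt (fun x : En n => ‖x‖ ^ 2) (2 • innerSL ℝ x) x :=
    (hasStrictFDerivAt_norm_sq x).hasFDerivAt
  have h2 : HasFDerivAt (fun x : En n => -‖x‖ ^ 2 / 4) ((-1/4 : ℝ) • (2 • innerSL ℝ x)) x := by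
    refine (h1.const_mul (-1/4)).congr_of_eventuallyEq (Eventually.of_forall fun y => ?_)
    ring
  have h3 : HasFDerivAt (fun x : En n => rgg x - ε) _ x := h2.exp.sub_const ε
  have h4 := (rg_sqmax_deriv (rgg x - ε)).comp_hasFDerivAt x h3
  refine h4.congr_fderiv ?_
  ext v
  simp [rgm, rgg]
  ring

lemma rg_psi_gradient (ε : ℝ) (x : En n) :
    gradient (fun x : En n => rgm ε x ^ 2) x = -(rgm ε x * rgg x) • x := by
  apply ext_inner_right ℝ
  intro w
  rw [rg_inner_gradient, (rg_psi_hasFDerivAt ε x).fderiv, inner_smul_left]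
  simp

lemma rg_psi_lip (ε : ℝ) (hε : 0 < ε) : LipschitzWith 1 (fun x : En n => rgm ε x ^ 2) := by
  apply lipschitzWith_of_nnnorm_fderiv_le (𝕜 := ℝ)
    (fun x => (rg_psi_hasFDerivAt ε x).differentiableAt)
  intro x
  have : ‖fderiv ℝ (fun x : En n => rgm ε x ^ 2) x‖ ≤ 1 := by
    rw [← rg_norm_gradient, rg_psi_gradient, norm_smul, norm_neg, Real.norm_eq_abs,
      abs_of_nonneg (mul_nonneg (rgm_nonneg ε x) (rgg_pos x).le)]
    calc rgm ε x * rgg x * ‖x‖ ≤ 1 * rgg x * ‖x‖ := by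
          gcongr
          · exact (rgg_pos x).le
          · exact (rgm_le ε hε x).trans (rgg_le_one x)
      _ ≤ 1 := by rw [one_mul]; exact rgg_norm_le x
  exact_mod_cast this

lemma rg_mul_lip {f ψ : En n → ℝ} {K L : ℝ≥0} (hf : LipschitzWith K f) (hψ : LipschitzWith L ψ)
    (R : ℝ) (hR0 : 0 ≤ R) (hR : ∀ x, x ∉ ball (0 : En n) R → ψ x = 0) (B : ℝ)
    (hB : ∀ x, |ψ x| ≤ B) :
    ∃ M, LipschitzWith M (fun x => f x * ψ x) := by
  have hB0 : 0 ≤ B := (abs_nonneg _).trans (hB 0)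
  set M : ℝ := (|f 0| + K * R) * L + K * B with hM
  have hM0 : 0 ≤ M := by positivity
  have main : ∀ x y, x ∈ ball (0 : En n) R → dist (f x * ψ x) (f y * ψ y) ≤ M * dist x y := by
    intro x y hx
    have h1 : |f x| ≤ |f 0| + K * R := by
      have := hf.dist_le_mul x 0
      rw [Real.dist_eq] at this
      have h2 : dist x 0 ≤ R := (mem_ball.1 hx).le
      have h3 : |f x| ≤ |f 0| + |f x - f 0| := by
        calc |f x| = |f 0 + (f x - f 0)| := by ring_nf
          _ ≤ _ := abs_add_le _ _
      have h4 : (K : ℝ) * dist x 0 ≤ K * R := by gcongr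
      linarith
    have h2 := hψ.dist_le_mul x y
    have h3 := hf.dist_le_mul x y
    rw [Real.dist_eq] at h2 h3 ⊢
    calc |f x * ψ x - f y * ψ y| = |f x * (ψ x - ψ y) + (f x - f y) * ψ y| := by ring_nf
      _ ≤ |f x| * |ψ x - ψ y| + |f x - f y| * |ψ y| := by
        rw [← abs_mul, ← abs_mul]; exact abs_add_le _ _
      _ ≤ (|f 0| + K * R) * (L * dist x y) + (K * dist x y) * B := by
        gcongr
        exact hB y
      _ = M * dist x y := by rw [hM]; ring
  refine ⟨⟨M, hM0⟩, LipschitzWith.of_dist_le_mul fun x y => ?_⟩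
  show _ ≤ M * dist x y
  by_cases hx : x ∈ ball (0 : En n) R
  · exact main x y hx
  · by_cases hy : y ∈ ball (0 : En n) R
    · rw [dist_comm, dist_comm x y]; exact main y x hy
    · rw [hR x hx, hR y hy]; simp; positivity

lemma rg_null {V : En n → ℝ} (hV : IsMinimizer univ V)
    (hom : ∀ t : ℝ, 0 < t → ∀ x, V (t • x) = t * V x) (hnull : volume {x | V x = 0} = 0) :
    V = 0 := by
  obtain ⟨K, hVl⟩ := rg_hom_lip hV.2.1 hom
  by_contra hne
  obtain ⟨x0, hx0⟩ := Function.ne_iff.1 hne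
  have hx0' : 0 < V x0 := lt_of_le_of_ne (hV.1 x0) (Ne.symm hx0)
  set ε := rgg x0 / 2 with hεd
  have hε : 0 < ε := by have := rgg_pos x0; positivity
  have h1 := rg_firstvar hV hVl (rg_psi_lip ε hε) (1 / ε)
    (fun x hx => by simp [rgm_zero ε hε x hx]) 1 one_pos
    (fun t ht _ x => add_nonneg (hV.1 x) (by have := hV.1 x; positivity)) (by
      intro t ht _
      have : volume.real (ball 0 (1 / ε) ∩ {x | 0 < V x}) = volume.real (ball (0 : En n) (1 / ε)) := by
        apply measureReal_congr
        have hae : ∀ᵐ x, V x ≠ 0 := by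
          rw [ae_iff]; simpa using hnull
        filter_upwards [hae] with x hx
        apply propext
        exact ⟨fun h => h.1, fun h => ⟨h, lt_of_le_of_ne (hV.1 x) (Ne.symm hx)⟩⟩
      rw [this]
      exact measureReal_mono inter_subset_left measure_ball_lt_top.ne)
  have h2 : ∫ x in ball 0 (1 / ε), inner ℝ (gradient V x) (gradient (fun x => rgm ε x ^ 2) x) =
      - ∫ x, rgm ε x * rgg x * V x := by
    rw [← integral_neg, ← setIntegral_eq_integral_of_forall_compl_eq_zero (s := ball 0 (1/ε))
      (f := fun x => -(rgm ε x * rgg x * V x))]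
    · apply integral_congr_ae
      apply ae_restrict_of_ae
      filter_upwards [hVl.ae_differentiableAt] with x hx
      rw [rg_psi_gradient, inner_smul_right, rg_euler hom x hx]; ring
    · intro x hx
      rw [rgm_zero ε hε x hx]; simp
  have hcont : Continuous (fun x : En n => rgm ε x * rgg x * V x) :=
    ((rgm_cont ε).mul rgg_cont).mul hVl.continuous
  have h3 : 0 < ∫ x, rgm ε x * rgg x * V x := by
    apply hcont.integral_pos_of_hasCompactSupport_nonneg_nonzero (x := x0)
    · apply HasCompactSupport.of_support_subset_isCompact (isCompact_closedBall 0 (1 / ε))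
      intro x hx
      by_contra hx2
      apply hx
      have : x ∉ ball (0 : En n) (1 / ε) := fun h => hx2 (ball_subset_closedBall h)
      simp [rgm_zero ε hε x this]
    · intro x
      exact mul_nonneg (mul_nonneg (rgm_nonneg ε x) (rgg_pos x).le) (hV.1 x)
    · have : 0 < rgm ε x0 := lt_max_of_lt_left (by have := rgg_pos x0; linarith)
      have := rgg_pos x0
      positivity
  rw [h2] at h1
  linarith

/-- Relative cutoff. -/
noncomputable def rgr (ε : ℝ) (x : En n) : ℝ := max (1 - ε * Real.exp (‖x‖ ^ 2 / 4)) 0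

lemma rgm_eq (ε : ℝ) (x : En n) : rgm ε x = rgg x * rgr ε x := by
  have h2 : rgg x * Real.exp (‖x‖ ^ 2 / 4) = 1 := by
    rw [rgg, ← Real.exp_add]; ring_nf; simp
  rw [rgm, rgr, mul_max_of_nonneg _ _ (rgg_pos x).le, mul_zero, mul_sub, mul_one]
  congr 2
  linear_combination ε * (-h2)

lemma rgg_sq (x : En n) : rgg x ^ 2 = Real.exp (-‖x‖ ^ 2 / 2) := by
  rw [rgg, ← Real.exp_nat_mul]; congr 1; push_cast; ring

lemma rgr_cont (ε : ℝ) : Continuous (rgr ε : En n → ℝ) := by unfold rgr; fun_prop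

lemma rgr_nonneg (ε : ℝ) (x : En n) : 0 ≤ rgr ε x := le_max_right _ _

lemma rgr_le (ε : ℝ) (hε : 0 < ε) (x : En n) : rgr ε x ≤ 1 :=
  max_le (by have := Real.exp_pos (‖x‖ ^ 2 / 4); nlinarith) zero_le_one

lemma rg_gauss_EL_eps {V w : En n → ℝ} {K L : ℝ≥0} (hV : IsMinimizer univ V)
    (hVl : LipschitzWith K V) (hom : ∀ t : ℝ, 0 < t → ∀ x, V (t • x) = t * V x)
    (hw : LipschitzWith L w) (hw0 : ∀ x, 0 ≤ w x) (hwV : ∀ x, w x ≤ V x) (ε : ℝ) (hε : 0 < ε) :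
    ∫ x, (rgr ε x ^ 2 * inner ℝ (gradient V x) (gradient w x) - rgr ε x * (V x * w x))
      ∂(stdGaussian (En n)) = 0 := by
  have hψ0 : ∀ x, x ∉ ball (0 : En n) (1 / ε) → rgm ε x ^ 2 = 0 :=
    fun x hx => by simp [rgm_zero ε hε x hx]
  have hψ1 : ∀ x : En n, |rgm ε x ^ 2| ≤ 1 := by
    intro x
    rw [abs_of_nonneg (by positivity)]
    exact pow_le_one₀ (rgm_nonneg ε x) ((rgm_le ε hε x).trans (rgg_le_one x))
  obtain ⟨M, hM⟩ := rg_mul_lip hw (rg_psi_lip ε hε) (1 / ε) (by positivity) hψ0 1 hψ1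
  have h1 := rg_EL hV hVl hM (1 / ε) (fun x hx => by rw [hψ0 x hx, mul_zero]) 1 zero_le_one (by
    intro x
    rw [abs_mul, abs_of_nonneg (hw0 x), one_mul]
    calc w x * |rgm ε x ^ 2| ≤ w x * 1 := by gcongr; exact hw0 x; exact hψ1 x
      _ ≤ V x := by rw [mul_one]; exact hwV x)
  obtain ⟨C, hC, hCi⟩ := rg_gauss_integral (n := n)
  rw [hCi, mul_eq_zero]
  right
  rw [← h1, ← setIntegral_eq_integral_of_forall_compl_eq_zero (s := ball 0 (1/ε))]
  · apply integral_congr_ae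
    apply ae_restrict_of_ae
    filter_upwards [hVl.ae_differentiableAt, hw.ae_differentiableAt] with x hx hx2
    have e : gradient (fun x => w x * rgm ε x ^ 2) x =
        rgm ε x ^ 2 • gradient w x - (w x * (rgm ε x * rgg x)) • x := by
      apply ext_inner_right ℝ
      intro v
      have hs : HasFDerivAt (fun x => w x * rgm ε x ^ 2) _ x :=
        hx2.hasFDerivAt.mul (rg_psi_hasFDerivAt ε x)
      rw [rg_inner_gradient, hs.fderiv, inner_sub_left, inner_smul_left, inner_smul_left,
        rg_inner_gradient]
      simp
      ring
    rw [e, inner_sub_right, inner_smul_right, inner_smul_right, rg_euler hom x hx, ← rgg_sq,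
      rgm_eq]
    ring
  · intro x hx
    have h2 := rgm_zero ε hε x hx
    rw [rgm_eq] at h2
    have h3 : rgr ε x = 0 := (mul_eq_zero.1 h2).resolve_left (rgg_pos x).ne'
    rw [h3]; simp

lemma rg_gauss_EL {V w : En n → ℝ} {K L : ℝ≥0} (hV : IsMinimizer univ V)
    (hVl : LipschitzWith K V) (hom : ∀ t : ℝ, 0 < t → ∀ x, V (t • x) = t * V x)
    (hw : LipschitzWith L w) (hw0 : ∀ x, 0 ≤ w x) (hwV : ∀ x, w x ≤ V x) :
    ∫ x, inner ℝ (gradient V x) (gradient w x) ∂(stdGaussian (En n)) =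
      ∫ x, V x * w x ∂(stdGaussian (En n)) := by
  set μ := stdGaussian (En n) with hμ
  have i1 : Integrable (fun x => inner ℝ (gradient V x) (gradient w x)) μ := by
    apply Integrable.of_bound (C := (K : ℝ) * L)
      ((rg_measurable_gradient V).inner (rg_measurable_gradient w)).aestronglyMeasurable
    refine Eventually.of_forall fun x => ?_
    exact (norm_inner_le_norm _ _).trans (mul_le_mul (rg_norm_gradient_le hVl x)
      (rg_norm_gradient_le hw x) (norm_nonneg _) K.2)
  have i2 : Integrable (fun x => V x * w x) μ := (rg_lip_memLp hVl).integrable_mul (rg_lip_memLp hw)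
  have lim : Tendsto (fun k : ℕ => ∫ x, (rgr (1 / ((k : ℝ) + 1)) x ^ 2 *
      inner ℝ (gradient V x) (gradient w x) - rgr (1 / ((k : ℝ) + 1)) x * (V x * w x)) ∂μ) atTop
      (nhds (∫ x, (inner ℝ (gradient V x) (gradient w x) - V x * w x) ∂μ)) := by
    apply tendsto_integral_of_dominated_convergence
      (fun x => ‖inner ℝ (gradient V x) (gradient w x)‖ + ‖V x * w x‖)
    · intro k
      exact (((rgr_cont _).pow 2).aestronglyMeasurable.mul i1.1).sub
        ((rgr_cont _).aestronglyMeasurable.mul i2.1)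
    · exact i1.norm.add i2.norm
    · intro k
      refine Eventually.of_forall fun x => ?_
      have hε : (0 : ℝ) < 1 / ((k : ℝ) + 1) := by positivity
      have a1 := rgr_nonneg (1 / ((k : ℝ) + 1)) x
      have a2 := rgr_le _ hε x
      refine (norm_sub_le _ _).trans ?_
      rw [norm_mul, norm_mul (rgr _ x)]
      apply add_le_add
      · refine mul_le_of_le_one_left (norm_nonneg _) ?_
        rw [Real.norm_eq_abs, abs_of_nonneg (by positivity)]
        exact pow_le_one₀ a1 a2
      · refine mul_le_of_le_one_left (norm_nonneg _) ?_
        rw [Real.norm_eq_abs, abs_of_nonneg a1]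
        exact a2
    · refine Eventually.of_forall fun x => ?_
      have h0 : Tendsto (fun k : ℕ => rgr (1 / ((k : ℝ) + 1)) x) atTop (nhds 1) := by
        have h1 := (tendsto_one_div_add_atTop_nhds_zero_nat (𝕜 := ℝ)).mul_const
          (Real.exp (‖x‖ ^ 2 / 4))
        have h2 := (h1.const_sub 1).max (tendsto_const_nhds (x := (0 : ℝ)))
        simpa [rgr] using h2
      have := ((h0.pow 2).mul_const (inner ℝ (gradient V x) (gradient w x))).sub
        (h0.mul_const (V x * w x))
      simpa using this
  have hz : ∀ k : ℕ, ∫ x, (rgr (1 / ((k : ℝ) + 1)) x ^ 2 *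
      inner ℝ (gradient V x) (gradient w x) - rgr (1 / ((k : ℝ) + 1)) x * (V x * w x)) ∂μ = 0 :=
    fun k => rg_gauss_EL_eps hV hVl hom hw hw0 hwV _ (by positivity)
  simp_rw [hz] at lim
  have := tendsto_nhds_unique lim tendsto_const_nhds
  rw [integral_sub i1 i2] at this
  linarith
end cutoff


open MeasureTheory Metric Set Filter ENNReal NNReal ProbabilityTheory

section prop
variable {n : ℕ}

lemma rg_int_pos {V : En n → ℝ} {K : ℝ≥0} (hVl : LipschitzWith K V) (h0 : ∀ x, 0 ≤ V x)
    (hne : V ≠ 0) : 0 < ∫ x, V x ∂(stdGaussian (En n)) := by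
  rw [integral_pos_iff_support_of_nonneg h0 ((rg_lip_memLp hVl).integrable (by norm_num))]
  rw [pos_iff_ne_zero]
  intro h
  have h1 := rg_ac_gauss h
  have h2 : IsOpen (Function.support V) := hVl.continuous.isOpen_support
  rw [h2.measure_eq_zero_iff (μ := (volume : Measure (En n)))] at h1
  exact hne (Function.support_eq_empty_iff.1 h1)

lemma rg_inner_int_gauss {V w : En n → ℝ} {K L : ℝ≥0} (hVl : LipschitzWith K V)
    (hw : LipschitzWith L w) :
    Integrable (fun x => inner ℝ (gradient V x) (gradient w x)) (stdGaussian (En n)) := by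
  apply Integrable.of_bound (C := (K : ℝ) * L)
    ((rg_measurable_gradient V).inner (rg_measurable_gradient w)).aestronglyMeasurable
  refine Eventually.of_forall fun x => ?_
  exact (norm_inner_le_norm _ _).trans (mul_le_mul (rg_norm_gradient_le hVl x)
    (rg_norm_gradient_le hw x) (norm_nonneg _) K.2)

lemma rg_prop {u V : En n → ℝ} (hu : IsMinimizer univ u) (hV : IsMinimizer univ V)
    (huh : ∀ t : ℝ, 0 < t → ∀ x, u (t • x) = t * u x)
    (hVh : ∀ t : ℝ, 0 < t → ∀ x, V (t • x) = t * V x)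
    (hle : ∀ x, u x ≤ V x) (hne : u ≠ 0) : ∃ c : ℝ, 0 < c ∧ c ≤ 1 ∧ ∀ x, u x = c * V x := by
  obtain ⟨K, hVl⟩ := rg_hom_lip hV.2.1 hVh
  obtain ⟨L, hul⟩ := rg_hom_lip hu.2.1 huh
  have hVne : V ≠ 0 := by
    rintro rfl
    exact hne (funext fun x => le_antisymm (hle x) (hu.1 x))
  have pu := rg_int_pos hul hu.1 hne
  have pV := rg_int_pos hVl hV.1 hVne
  have e1 := rg_gauss_EL hV hVl hVh hul hu.1 hle
  have e2 := rg_gauss_EL hV hVl hVh hVl hV.1 (fun x => le_rfl)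
  have e3 := rg_gauss_EL hu hul huh hul hu.1 (fun x => le_rfl)
  set μ := stdGaussian (En n) with hμ
  set c := (∫ x, u x ∂μ) / ∫ x, V x ∂μ with hc
  have hc0 : 0 < c := div_pos pu pV
  have mu := rg_lip_memLp hul
  have mV := rg_lip_memLp hVl
  have hfl : LipschitzWith (L + ‖c‖₊ * K) (fun x => u x - c * V x) :=
    hul.sub ((lipschitzWith_smul c).comp hVl)
  have hmean : ∫ x, (u x - c * V x) ∂μ = 0 := by
    rw [integral_sub (mu.integrable (by norm_num)) ((mV.integrable (by norm_num)).const_mul c),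
      integral_const_mul, hc, div_mul_cancel₀ _ pV.ne', sub_self]
  have hgrad : ∀ᵐ x ∂μ, gradient (fun x => u x - c * V x) x = gradient u x - c • gradient V x := by
    filter_upwards [rg_ae_diff hul, rg_ae_diff hVl] with x hx1 hx2
    apply ext_inner_right ℝ
    intro w
    have hs : HasFDerivAt (fun x => u x - c * V x) (fderiv ℝ u x - c • fderiv ℝ V x) x :=
      hx1.hasFDerivAt.sub (hx2.hasFDerivAt.const_mul c)
    rw [rg_inner_gradient, inner_sub_left, inner_smul_left, rg_inner_gradient,
      rg_inner_gradient, hs.fderiv]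
    simp
  have j1 : Integrable (fun x => inner ℝ (gradient u x) (gradient u x)) μ := rg_inner_int_gauss hul hul
  have j2 : Integrable (fun x => inner ℝ (gradient V x) (gradient u x)) μ := rg_inner_int_gauss hVl hul
  have j3 : Integrable (fun x => inner ℝ (gradient V x) (gradient V x)) μ := rg_inner_int_gauss hVl hVl
  have k1 : Integrable (fun x => u x * u x) μ := mu.integrable_mul mu
  have k2 : Integrable (fun x => V x * u x) μ := mV.integrable_mul mu
  have k3 : Integrable (fun x => V x * V x) μ := mV.integrable_mul mV
  have lin : ∀ a b d : En n → ℝ, Integrable a μ → Integrable b μ → Integrable d μ →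
      ∫ x, (a x - (2 * c) * b x + c ^ 2 * d x) ∂μ =
      (∫ x, a x ∂μ) - 2 * c * (∫ x, b x ∂μ) + c ^ 2 * ∫ x, d x ∂μ := by
    intro a b d ha hb hd
    have h1 : Integrable (fun x => a x - (2 * c) * b x) μ := ha.sub (hb.const_mul _)
    rw [integral_add h1 (hd.const_mul _), integral_sub ha (hb.const_mul _), integral_const_mul,
      integral_const_mul]
  have hen : ∫ x, ‖gradient (fun x => u x - c * V x) x‖ ^ 2 ∂μ ≤ ∫ x, (u x - c * V x) ^ 2 ∂μ := by
    apply le_of_eq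
    calc _ = ∫ x, (inner ℝ (gradient u x) (gradient u x) - (2 * c) *
          inner ℝ (gradient V x) (gradient u x) + c ^ 2 * inner ℝ (gradient V x) (gradient V x)) ∂μ := by
          apply integral_congr_ae
          filter_upwards [hgrad] with x hx
          rw [hx, norm_sub_sq_real, inner_smul_right, real_inner_comm, norm_smul, mul_pow,
            real_inner_self_eq_norm_sq, real_inner_self_eq_norm_sq, Real.norm_eq_abs, sq_abs]
          ring
      _ = ∫ x, (u x * u x - (2 * c) * (V x * u x) + c ^ 2 * (V x * V x)) ∂μ := by
          rw [lin _ _ _ j1 j2 j3, lin _ _ _ k1 k2 k3, e1, e2, e3]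
      _ = _ := by congr 1; ext x; ring
  obtain ⟨a, ha⟩ := rg_poincare_rigid _ _ hfl hmean hen
  have ha' : ∀ x, u x - c * V x = inner ℝ a x := by
    intro x
    rw [ha x, rg_hom_zero huh, rg_hom_zero hVh]; simp
  have ha0 : a = 0 := by
    by_contra hane
    apply hVne
    apply rg_null hV hVh
    have hsub : {x | V x = 0} ⊆ ((LinearMap.ker (innerSL ℝ a : En n →L[ℝ] ℝ).toLinearMap : Submodule ℝ (En n)) : Set (En n)) := by
      intro x hx
      have h1 : V x = 0 := hx
      have h2 : u x = 0 := le_antisymm ((hle x).trans h1.le) (hu.1 x)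
      have h3 := ha' x
      rw [h1, h2] at h3
      simp only [SetLike.mem_coe, LinearMap.mem_ker, ContinuousLinearMap.coe_coe, innerSL_apply_apply]
      rw [← h3]; ring
    refine measure_mono_null hsub (Measure.addHaar_submodule _ _ ?_)
    intro htop
    have : a ∈ LinearMap.ker (innerSL ℝ a : En n →L[ℝ] ℝ).toLinearMap := by rw [htop]; trivial
    rw [LinearMap.mem_ker] at this
    exact hane (inner_self_eq_zero.1 this)
  have hfin : ∀ x, u x = c * V x := by
    intro x
    have := ha' x
    rw [ha0, inner_zero_left] at this
    linarith
  refine ⟨c, hc0, ?_, hfin⟩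
  obtain ⟨x, hx⟩ := Function.ne_iff.1 hVne
  have hx' : 0 < V x := lt_of_le_of_ne (hV.1 x) (Ne.symm hx)
  have := hle x
  rw [hfin x] at this
  exact (mul_le_iff_le_one_left hx').1 this
end prop


open MeasureTheory Metric Set Filter ENNReal NNReal ProbabilityTheory

section domvar
variable {n : ℕ}

lemma rg_dv_anti {η : En n → ℝ} {L : ℝ≥0} (hηl : LipschitzWith L η) (e : En n)
    (he : ‖e‖ * L ≤ 1 / 2) (x y : En n) :
    ‖(x + η x • e) - (y + η y • e) - (x - y)‖ ≤ 1 / 2 * ‖x - y‖ := by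
  have h1 : (x + η x • e) - (y + η y • e) - (x - y) = (η x - η y) • e := by
    rw [sub_smul]; abel
  rw [h1, norm_smul]
  have h2 := hηl.norm_sub_le x y
  calc ‖η x - η y‖ * ‖e‖ ≤ (L * ‖x - y‖) * ‖e‖ := by gcongr
    _ = (‖e‖ * L) * ‖x - y‖ := by ring
    _ ≤ _ := by gcongr

lemma rg_dv_homeo {η : En n → ℝ} {L : ℝ≥0} (hηl : LipschitzWith L η) (e : En n)
    (he : ‖e‖ * L ≤ 1 / 2) :
    ∃ S : En n → En n, LipschitzWith 2 S ∧ (∀ x, S (x + η x • e) = x) ∧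
      ∀ y, S y + η (S y) • e = y := by
  have ha : ApproximatesLinearOn (fun x => x + η x • e)
      ((ContinuousLinearEquiv.refl ℝ (En n) : En n ≃L[ℝ] En n) : En n →L[ℝ] En n) univ (1 / 2 : ℝ≥0) := by
    intro x _ y _
    have := rg_dv_anti hηl e he x y
    simpa using this
  have hanti : AntilipschitzWith 2 (fun x => x + η x • e) := by
    apply AntilipschitzWith.of_le_mul_dist
    intro x y
    have h := rg_dv_anti hηl e he x y
    rw [dist_eq_norm, dist_eq_norm]
    have h2 : ‖x - y‖ ≤ ‖(x + η x • e) - (y + η y • e)‖ +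
        ‖(x + η x • e) - (y + η y • e) - (x - y)‖ := by
      calc ‖x - y‖ = ‖((x + η x • e) - (y + η y • e)) -
            ((x + η x • e) - (y + η y • e) - (x - y))‖ := by congr 1; abel
        _ ≤ _ := norm_sub_le _ _
    show _ ≤ (2 : ℝ) * _
    linarith
  have hc : Subsingleton (En n) ∨ (1 / 2 : ℝ≥0) <
      ‖((ContinuousLinearEquiv.refl ℝ (En n)).symm : En n →L[ℝ] En n)‖₊⁻¹ := by
    rcases subsingleton_or_nontrivial (En n) with h | h
    · exact Or.inl h
    · right
      have : ‖((ContinuousLinearEquiv.refl ℝ (En n)).symm : En n →L[ℝ] En n)‖₊ = 1 := by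
        have h1 : ((ContinuousLinearEquiv.refl ℝ (En n)).symm : En n →L[ℝ] En n) =
          ContinuousLinearMap.id ℝ (En n) := by ext; simp
        rw [h1]
        exact NNReal.eq ContinuousLinearMap.norm_id
      rw [this]
      rw [inv_one]
      exact NNReal.coe_lt_coe.1 (by push_cast; norm_num)
  let T := ha.toHomeomorph _ hc
  have hTa : ∀ x, T x = x + η x • e := fun x => rfl
  refine ⟨T.symm, ?_, ?_, ?_⟩
  · apply hanti.to_rightInverse
    intro y
    show T (T.symm y) = y
    exact T.apply_symm_apply y
  · intro x
    rw [← hTa]; exact T.symm_apply_apply x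
  · intro y
    rw [← hTa]; exact T.apply_symm_apply y

/-- derivative of the domain map -/
noncomputable def rgA (φ : En n →L[ℝ] ℝ) (e : En n) : En n →L[ℝ] En n :=
  ContinuousLinearMap.id ℝ (En n) + φ.smulRight e

lemma rgA_det (φ : En n →L[ℝ] ℝ) (e : En n) : (rgA φ e).det = 1 + φ e := by
  exact LinearMap.transvection.det (φ : En n →ₗ[ℝ] ℝ) e

lemma rgA_equiv (φ : En n →L[ℝ] ℝ) (e : En n) (h : 1 + φ e ≠ 0) :
    ∃ B : En n ≃L[ℝ] En n, (B : En n →L[ℝ] En n) = rgA φ e ∧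
      ∀ w, B.symm w = w - (φ w / (1 + φ e)) • e := by
  refine ⟨ContinuousLinearEquiv.equivOfInverse (rgA φ e) (rgA (-(1 / (1 + φ e)) • φ) e) ?_ ?_, ?_, ?_⟩
  · intro w
    simp only [rgA, add_apply, ContinuousLinearMap.id_apply,
      ContinuousLinearMap.smulRight_apply, smul_apply, map_add, map_smul,
      smul_eq_mul]
    match_scalars
    · norm_num
    · field_simp; ring
  · intro w
    simp only [rgA, add_apply, ContinuousLinearMap.id_apply,
      ContinuousLinearMap.smulRight_apply, smul_apply, map_add, map_smul,
      smul_eq_mul]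
    match_scalars
    · norm_num
    · field_simp; ring
  · rfl
  · intro w
    show rgA (-(1 / (1 + φ e)) • φ) e w = _
    simp [rgA, sub_eq_add_neg, ← neg_smul]
    congr 1; field_simp

lemma rg_dv {u η : En n → ℝ} {K L : ℝ≥0} (hu : IsMinimizer univ u) (hul : LipschitzWith K u)
    (hη : ContDiff ℝ 1 η) (hηl : LipschitzWith L η) (R : ℝ)
    (hR : ∀ x, x ∉ ball (0 : En n) R → η x = 0) (e : En n) (he : ‖e‖ * L ≤ 1 / 2) :
    0 ≤ (∫ x in ball 0 R, (‖gradient u x‖ ^ 2 * fderiv ℝ η x e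
        - 2 * (fderiv ℝ u x e * inner ℝ (gradient u x) (gradient η x))
        + 2 * ((fderiv ℝ u x e) ^ 2 * ‖gradient η x‖ ^ 2)))
      + ∫ x in ball 0 R ∩ {x | 0 < u x}, fderiv ℝ η x e := by
  obtain ⟨S, hSl, hS1, hS2⟩ := rg_dv_homeo hηl e he
  set T : En n → En n := fun x => x + η x • e with hT
  have hinj : Function.Injective T := Function.LeftInverse.injective hS1
  have hTout : ∀ x, x ∉ ball (0 : En n) R → T x = x := fun x hx => by simp [hT, hR x hx]
  have hTball : ∀ x, T x ∈ ball (0 : En n) R ↔ x ∈ ball (0 : En n) R := by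
    intro x
    constructor
    · intro h; by_contra hx; rw [hTout x hx] at h; exact hx h
    · intro h; by_contra hx
      have := hinj (hTout _ hx)
      rw [this] at hx; exact hx h
  have himg : T '' ball 0 R = ball 0 R := by
    ext y
    constructor
    · rintro ⟨x, hx, rfl⟩; exact (hTball x).2 hx
    · intro hy
      refine ⟨S y, ?_, hS2 y⟩
      rw [← hTball]; show S y + η (S y) • e ∈ _; rw [hS2]; exact hy
  have hvl : LipschitzWith (K * 2) (fun x => u (S x)) := hul.comp hSl
  have hmin := rg_min hu hul hvl (fun x => hu.1 _) R (fun x hx => by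
    have h1 := hS1 x
    rw [hR x hx, zero_smul, add_zero] at h1
    show u (S x) = u x
    rw [h1])
  have himg2 : T '' (ball 0 R ∩ {x | 0 < u x}) = ball 0 R ∩ {x | 0 < u (S x)} := by
    ext y
    constructor
    · rintro ⟨x, ⟨hx, hx2⟩, rfl⟩
      refine ⟨(hTball x).2 hx, ?_⟩
      show 0 < u (S (x + η x • e)); rw [hS1]; exact hx2
    · rintro ⟨hy, hy2⟩
      refine ⟨S y, ⟨?_, hy2⟩, hS2 y⟩
      rw [← hTball]; show S y + η (S y) • e ∈ _; rw [hS2]; exact hy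
  have hηd : ∀ x, HasFDerivAt η (fderiv ℝ η x) x :=
    fun x => (hη.differentiable (by norm_num) x).hasFDerivAt
  have hTd : ∀ x, HasFDerivAt T (rgA (fderiv ℝ η x) e) x := fun x =>
    (hasFDerivAt_id x).add ((hηd x).smul_const e)
  have hJ : ∀ x, |fderiv ℝ η x e| ≤ 1 / 2 := by
    intro x
    calc |fderiv ℝ η x e| ≤ ‖fderiv ℝ η x‖ * ‖e‖ := (fderiv ℝ η x).le_opNorm e
      _ ≤ L * ‖e‖ := by gcongr; exact norm_fderiv_le_of_lipschitz ℝ hηl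
      _ ≤ 1 / 2 := by linarith
  have hJ' : ∀ x, 1 / 2 ≤ 1 + fderiv ℝ η x e := fun x => by
    have := (abs_le.1 (hJ x)).1; linarith
  have hEm : MeasurableSet {x | 0 < u x} := (isOpen_lt continuous_const hul.continuous).measurableSet
  have hηc : Continuous (fun x => fderiv ℝ η x e) := (hη.continuous_fderiv (by norm_num)).clm_apply continuous_const
  have hηi : ∀ s : Set (En n), IntegrableOn (fun x => fderiv ℝ η x e) (ball 0 R ∩ s) := by
    intro s
    apply Measure.integrableOn_of_bounded (M := 1 / 2) (rg_ball_fin R s) hηc.aestronglyMeasurable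
    exact Eventually.of_forall hJ
  -- measure term
  have hmeas : volume.real (ball 0 R ∩ {x | 0 < u (S x)}) =
      volume.real (ball 0 R ∩ {x | 0 < u x}) + ∫ x in ball 0 R ∩ {x | 0 < u x}, fderiv ℝ η x e := by
    have h1 := integral_image_eq_integral_abs_det_fderiv_smul volume
      (isOpen_ball.measurableSet.inter hEm) (fun x _ => (hTd x).hasFDerivWithinAt)
      hinj.injOn (fun _ => (1 : ℝ)) (s := ball 0 R ∩ {x | 0 < u x})
    rw [himg2] at h1
    simp only [integral_const, smul_eq_mul, mul_one, measureReal_restrict_apply_univ] at h1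
    rw [h1]
    have h2 : ∀ x, |(rgA (fderiv ℝ η x) e).det| = 1 + fderiv ℝ η x e := by
      intro x; rw [rgA_det, abs_of_nonneg]; have := hJ' x; linarith
    simp_rw [h2]
    have hone : IntegrableOn (fun _ : En n => (1 : ℝ)) (ball 0 R ∩ {x | 0 < u x}) :=
      integrableOn_const (rg_ball_fin R _)
    rw [integral_add hone (hηi _)]
    simp
  -- energy term
  have hb1 : ∀ x, ‖gradient u x‖ ≤ K := rg_norm_gradient_le hul
  have hb2 : ∀ x, ‖gradient η x‖ ≤ L := rg_norm_gradient_le hηl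
  have hb3 : ∀ x, |fderiv ℝ u x e| ≤ K * ‖e‖ := by
    intro x
    calc |fderiv ℝ u x e| ≤ ‖fderiv ℝ u x‖ * ‖e‖ := (fderiv ℝ u x).le_opNorm e
      _ ≤ K * ‖e‖ := by gcongr; exact norm_fderiv_le_of_lipschitz ℝ hul
  have hm3 : Measurable (fun x => fderiv ℝ u x e) := measurable_fderiv_apply_const ℝ u e
  have hq1 : IntegrableOn (fun x => ‖gradient u x‖ ^ 2 * fderiv ℝ η x e) (ball 0 R) := by
    apply Measure.integrableOn_of_bounded (M := (K : ℝ) ^ 2 * (1 / 2)) measure_ball_lt_top.ne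
      (((rg_measurable_gradient u).norm.pow_const 2).mul hηc.measurable).aestronglyMeasurable
    refine Eventually.of_forall fun x => ?_
    rw [Pi.mul_apply, norm_mul, norm_pow, norm_norm, Real.norm_eq_abs]
    gcongr
    · exact hb1 x
    · exact hJ x
  have hq2 : IntegrableOn (fun x => 2 * (fderiv ℝ u x e * inner ℝ (gradient u x) (gradient η x)))
      (ball 0 R) := by
    apply Integrable.const_mul
    apply Measure.integrableOn_of_bounded (M := (K * ‖e‖) * (K * L)) measure_ball_lt_top.ne
      (hm3.mul ((rg_measurable_gradient u).inner (rg_measurable_gradient η))).aestronglyMeasurable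
    refine Eventually.of_forall fun x => ?_
    rw [Pi.mul_apply, norm_mul]
    refine mul_le_mul (hb3 x) ?_ (norm_nonneg _) (by positivity)
    exact (norm_inner_le_norm _ _).trans (mul_le_mul (hb1 x) (hb2 x) (norm_nonneg _) K.2)
  have hq3 : IntegrableOn (fun x => 2 * ((fderiv ℝ u x e) ^ 2 * ‖gradient η x‖ ^ 2)) (ball 0 R) := by
    apply Integrable.const_mul
    apply Measure.integrableOn_of_bounded (M := (K * ‖e‖) ^ 2 * L ^ 2) measure_ball_lt_top.ne
      ((hm3.pow_const 2).mul ((rg_measurable_gradient η).norm.pow_const 2)).aestronglyMeasurable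
    refine Eventually.of_forall fun x => ?_
    rw [Pi.mul_apply, norm_mul, norm_pow, norm_pow, norm_norm, Real.norm_eq_abs]
    gcongr
    · exact hb3 x
    · exact hb2 x
  have hq12 : IntegrableOn (fun x => ‖gradient u x‖ ^ 2 * fderiv ℝ η x e
        - 2 * (fderiv ℝ u x e * inner ℝ (gradient u x) (gradient η x))) (ball 0 R) := hq1.sub hq2
  have hq : IntegrableOn (fun x => ‖gradient u x‖ ^ 2 * fderiv ℝ η x e
        - 2 * (fderiv ℝ u x e * inner ℝ (gradient u x) (gradient η x))
        + 2 * ((fderiv ℝ u x e) ^ 2 * ‖gradient η x‖ ^ 2)) (ball 0 R) := hq12.add hq3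
  have hen : ∫ x in ball 0 R, ‖gradient (fun x => u (S x)) x‖ ^ 2 ≤
      (∫ x in ball 0 R, ‖gradient u x‖ ^ 2) +
      ∫ x in ball 0 R, (‖gradient u x‖ ^ 2 * fderiv ℝ η x e
        - 2 * (fderiv ℝ u x e * inner ℝ (gradient u x) (gradient η x))
        + 2 * ((fderiv ℝ u x e) ^ 2 * ‖gradient η x‖ ^ 2)) := by
    have h1 := integral_image_eq_integral_abs_det_fderiv_smul volume
      (isOpen_ball.measurableSet) (fun x _ => (hTd x).hasFDerivWithinAt)
      hinj.injOn (fun x => ‖gradient (fun x => u (S x)) x‖ ^ 2) (s := ball 0 R)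
    have h2 := (integrableOn_image_iff_integrableOn_abs_det_fderiv_smul volume
      (isOpen_ball.measurableSet) (fun x _ => (hTd x).hasFDerivWithinAt)
      hinj.injOn (fun x => ‖gradient (fun x => u (S x)) x‖ ^ 2) (s := ball 0 R)).1 (by
        rw [himg]; exact rg_grad_sq_int hvl R)
    rw [himg] at h1
    rw [h1, ← integral_add (rg_grad_sq_int hul R) hq]
    apply integral_mono_ae h2 ((rg_grad_sq_int hul R).add hq)
    apply ae_restrict_of_ae
    filter_upwards [hul.ae_differentiableAt] with x hx
    have hJx := hJ' x
    set J := 1 + fderiv ℝ η x e with hJd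
    have hJ0 : 0 < J := by linarith
    obtain ⟨B, hB1, hB2⟩ := rgA_equiv (fderiv ℝ η x) e hJ0.ne'
    have hSd : HasFDerivAt S (B.symm : En n →L[ℝ] En n) (T x) := by
      apply HasFDerivAt.of_local_left_inverse (f := T) hSl.continuous.continuousAt
      · rw [hB1, hS1]; exact hTd x
      · exact Eventually.of_forall hS2
    have hvd : HasFDerivAt (fun x => u (S x)) ((fderiv ℝ u x).comp (B.symm : En n →L[ℝ] En n)) (T x) := by
      apply HasFDerivAt.comp (T x) _ hSd
      rw [hS1]; exact hx.hasFDerivAt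
    have hg : gradient (fun x => u (S x)) (T x) =
        gradient u x - (fderiv ℝ u x e / J) • gradient η x := by
      apply ext_inner_right ℝ
      intro w
      rw [rg_inner_gradient, hvd.fderiv, inner_sub_left, inner_smul_left, rg_inner_gradient,
        rg_inner_gradient]
      simp only [ContinuousLinearMap.comp_apply, ContinuousLinearEquiv.coe_coe, hB2, map_sub, map_smul]
      simp
      ring
    simp only [smul_eq_mul]
    rw [hg, rgA_det, ← hJd, abs_of_pos hJ0, norm_sub_sq_real, inner_smul_right, norm_smul, mul_pow,
      Real.norm_eq_abs, sq_abs]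
    set d := fderiv ℝ u x e
    set i := inner ℝ (gradient u x) (gradient η x)
    have hfd : fderiv ℝ η x e = J - 1 := by rw [hJd]; ring
    rw [Pi.add_apply, hfd]
    have h3 : J * (‖gradient u x‖ ^ 2 - 2 * (d / J * i) + (d / J) ^ 2 * ‖gradient η x‖ ^ 2) =
        J * ‖gradient u x‖ ^ 2 - 2 * (d * i) + 1 / J * (d ^ 2 * ‖gradient η x‖ ^ 2) := by
      field_simp
    rw [h3]
    have h4 : 1 / J ≤ 2 := by rw [div_le_iff₀ hJ0]; linarith
    have h5 : 1 / J * (d ^ 2 * ‖gradient η x‖ ^ 2) ≤ 2 * (d ^ 2 * ‖gradient η x‖ ^ 2) := by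
      gcongr
    linarith
  rw [hmeas] at hmin
  linarith

lemma rg_dv_eq {u η : En n → ℝ} {K L : ℝ≥0} (hu : IsMinimizer univ u) (hul : LipschitzWith K u)
    (hη : ContDiff ℝ 1 η) (hηl : LipschitzWith L η) (R : ℝ)
    (hR : ∀ x, x ∉ ball (0 : En n) R → η x = 0) (e : En n) :
    (∫ x in ball 0 R, (‖gradient u x‖ ^ 2 * fderiv ℝ η x e
        - 2 * (fderiv ℝ u x e * inner ℝ (gradient u x) (gradient η x))))
      + (∫ x in ball 0 R ∩ {x | 0 < u x}, fderiv ℝ η x e) = 0 := by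
  set A := ∫ x in ball 0 R, (‖gradient u x‖ ^ 2 * fderiv ℝ η x e
        - 2 * (fderiv ℝ u x e * inner ℝ (gradient u x) (gradient η x))) with hA
  set M := ∫ x in ball 0 R ∩ {x | 0 < u x}, fderiv ℝ η x e with hM
  set Q := ∫ x in ball 0 R, 2 * ((fderiv ℝ u x e) ^ 2 * ‖gradient η x‖ ^ 2) with hQ
  have hηc : Continuous (fun x => fderiv ℝ η x e) := (hη.continuous_fderiv (by norm_num)).clm_apply continuous_const
  have hb1 : ∀ x, ‖gradient u x‖ ≤ K := rg_norm_gradient_le hul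
  have hb2 : ∀ x, ‖gradient η x‖ ≤ L := rg_norm_gradient_le hηl
  have hb3 : ∀ x, |fderiv ℝ u x e| ≤ K * ‖e‖ := by
    intro x
    calc |fderiv ℝ u x e| ≤ ‖fderiv ℝ u x‖ * ‖e‖ := (fderiv ℝ u x).le_opNorm e
      _ ≤ K * ‖e‖ := by gcongr; exact norm_fderiv_le_of_lipschitz ℝ hul
  have hb4 : ∀ x, |fderiv ℝ η x e| ≤ L * ‖e‖ := by
    intro x
    calc |fderiv ℝ η x e| ≤ ‖fderiv ℝ η x‖ * ‖e‖ := (fderiv ℝ η x).le_opNorm e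
      _ ≤ L * ‖e‖ := by gcongr; exact norm_fderiv_le_of_lipschitz ℝ hηl
  have hm3 : Measurable (fun x => fderiv ℝ u x e) := measurable_fderiv_apply_const ℝ u e
  have hq1 : IntegrableOn (fun x => ‖gradient u x‖ ^ 2 * fderiv ℝ η x e) (ball 0 R) := by
    apply Measure.integrableOn_of_bounded (M := (K : ℝ) ^ 2 * (L * ‖e‖)) measure_ball_lt_top.ne
      (((rg_measurable_gradient u).norm.pow_const 2).mul hηc.measurable).aestronglyMeasurable
    refine Eventually.of_forall fun x => ?_
    rw [Pi.mul_apply, norm_mul, norm_pow, norm_norm, Real.norm_eq_abs]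
    gcongr
    · exact hb1 x
    · exact hb4 x
  have hq2 : IntegrableOn (fun x => 2 * (fderiv ℝ u x e * inner ℝ (gradient u x) (gradient η x)))
      (ball 0 R) := by
    apply Integrable.const_mul
    apply Measure.integrableOn_of_bounded (M := (K * ‖e‖) * (K * L)) measure_ball_lt_top.ne
      (hm3.mul ((rg_measurable_gradient u).inner (rg_measurable_gradient η))).aestronglyMeasurable
    refine Eventually.of_forall fun x => ?_
    rw [Pi.mul_apply, norm_mul]
    refine mul_le_mul (hb3 x) ?_ (norm_nonneg _) (by positivity)
    exact (norm_inner_le_norm _ _).trans (mul_le_mul (hb1 x) (hb2 x) (norm_nonneg _) K.2)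
  have hq3 : IntegrableOn (fun x => 2 * ((fderiv ℝ u x e) ^ 2 * ‖gradient η x‖ ^ 2)) (ball 0 R) := by
    apply Integrable.const_mul
    apply Measure.integrableOn_of_bounded (M := (K * ‖e‖) ^ 2 * L ^ 2) measure_ball_lt_top.ne
      ((hm3.pow_const 2).mul ((rg_measurable_gradient η).norm.pow_const 2)).aestronglyMeasurable
    refine Eventually.of_forall fun x => ?_
    rw [Pi.mul_apply, norm_mul, norm_pow, norm_pow, norm_norm, Real.norm_eq_abs]
    gcongr
    · exact hb3 x
    · exact hb2 x
  have hq12 : IntegrableOn (fun x => ‖gradient u x‖ ^ 2 * fderiv ℝ η x e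
        - 2 * (fderiv ℝ u x e * inner ℝ (gradient u x) (gradient η x))) (ball 0 R) := hq1.sub hq2
  have key : ∀ t : ℝ, |t| * (‖e‖ * L) ≤ 1 / 2 → 0 ≤ t * (A + M) + t ^ 2 * Q := by
    intro t ht
    have h := rg_dv hu hul hη hηl R hR (t • e) (by rw [norm_smul, Real.norm_eq_abs]; linarith)
    have h1 : ∀ x, ‖gradient u x‖ ^ 2 * fderiv ℝ η x (t • e)
        - 2 * (fderiv ℝ u x (t • e) * inner ℝ (gradient u x) (gradient η x))
        + 2 * ((fderiv ℝ u x (t • e)) ^ 2 * ‖gradient η x‖ ^ 2) =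
        t * (‖gradient u x‖ ^ 2 * fderiv ℝ η x e
        - 2 * (fderiv ℝ u x e * inner ℝ (gradient u x) (gradient η x)))
        + t ^ 2 * (2 * ((fderiv ℝ u x e) ^ 2 * ‖gradient η x‖ ^ 2)) := by
      intro x
      simp only [map_smul, smul_eq_mul]; ring
    simp_rw [h1] at h
    rw [integral_add (hq12.const_mul t) (hq3.const_mul _), integral_const_mul t,
      integral_const_mul (t ^ 2)] at h
    simp only [map_smul, smul_eq_mul] at h
    rw [integral_const_mul t] at h
    rw [← hA, ← hM, ← hQ] at h
    linarith
  have hQ0 : 0 ≤ Q := integral_nonneg fun x => by positivity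
  set D := ‖e‖ * L with hD
  have hD0 : 0 ≤ D := by positivity
  by_contra hne
  set B := A + M with hB
  have hpos : 0 < |B| := abs_pos.2 hne
  set s := min (1 / (2 * (D + 1))) (|B| / (2 * (Q + 1))) with hs
  have hs0 : 0 < s := lt_min (by positivity) (by positivity)
  have hs1 : s * (2 * (D + 1)) ≤ 1 := by
    rw [← le_div_iff₀ (by positivity)]; exact min_le_left _ _
  have hs2 : s * (2 * (Q + 1)) ≤ |B| := by
    rw [← le_div_iff₀ (by positivity)]; exact min_le_right _ _
  have hsmall : s * D ≤ 1 / 2 := by nlinarith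
  have hfin : s * |B| ≤ s ^ 2 * Q := by
    rcases abs_cases B with ⟨h, _⟩ | ⟨h, _⟩
    · have := key (-s) (by rw [abs_neg, abs_of_pos hs0]; exact hsmall)
      rw [h]; nlinarith
    · have := key s (by rw [abs_of_pos hs0]; exact hsmall)
      rw [h]; nlinarith
  have : |B| ≤ s * Q := by
    have h3 : s * |B| ≤ s * (s * Q) := by nlinarith
    exact le_of_mul_le_mul_left h3 hs0
  nlinarith
end domvar


open MeasureTheory Metric Set Filter ENNReal NNReal ProbabilityTheory

section final
variable {n : ℕ}

lemma rg_full {E : Set (En n)} (hE : IsOpen E) (hne : E.Nonempty)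
    (h : ∀ η : En n → ℝ, ContDiff ℝ 1 η → HasCompactSupport η → ∀ e : En n,
      ∫ x in E, fderiv ℝ η x e = 0) : volume Eᶜ = 0 := by
  set g : En n → ℝ := E.indicator (fun _ => (1 : ℝ)) with hg
  have hgi : LocallyIntegrable g volume :=
    (locallyIntegrable_const (1 : ℝ)).indicator hE.measurableSet
  have hconst : ∀ (φ : ContDiffBump (0 : En n)) (x y : En n),
      convolution (φ.normed volume) g (ContinuousLinearMap.lsmul ℝ ℝ) volume x =
      convolution (φ.normed volume) g (ContinuousLinearMap.lsmul ℝ ℝ) volume y := by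
    intro φ
    have hcs : HasCompactSupport (φ.normed volume) := φ.hasCompactSupport_normed
    have hcd : ContDiff ℝ 1 (φ.normed volume) := φ.contDiff_normed
    have hd := fun x => hcs.hasFDerivAt_convolution_left (ContinuousLinearMap.lsmul ℝ ℝ) hcd hgi x
    refine is_const_of_fderiv_eq_zero (𝕜 := ℝ) (fun x => (hd x).differentiableAt) fun x => ?_
    rw [(hd x).fderiv]
    ext e
    have hex : ConvolutionExistsAt (fderiv ℝ (φ.normed volume)) g x
        (ContinuousLinearMap.precompL (En n) (ContinuousLinearMap.lsmul ℝ ℝ)) volume :=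
      ((hcs.fderiv ℝ).convolutionExists_left _ (hcd.continuous_fderiv (by norm_num)) hgi) x
    rw [convolution_eq_swap]
    have hex2 := hex.integrable_swap
    rw [ContinuousLinearMap.integral_apply hex2]
    have h2 := h (fun y => φ.normed volume (x - y)) (hcd.comp (contDiff_const.sub contDiff_id)) (by
      exact hcs.comp_homeomorph (Homeomorph.subLeft x)) e
    have h3 : ∀ y, fderiv ℝ (fun y => φ.normed volume (x - y)) y e =
        - fderiv ℝ (φ.normed volume) (x - y) e := by
      intro y
      have hs : HasFDerivAt (fun y => φ.normed volume (x - y)) _ y :=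
        ((hcd.differentiable (by norm_num) (x - y)).hasFDerivAt).comp y
          ((hasFDerivAt_id y).const_sub x)
      rw [hs.fderiv]
      simp
    simp_rw [h3] at h2
    rw [integral_neg, neg_eq_zero] at h2
    rw [← integral_indicator hE.measurableSet] at h2
    simp only [zero_apply]
    rw [← h2]
    congr 1
    ext y
    by_cases hy : y ∈ E
    · simp [hg, hy]
    · simp [hg, hy]
  obtain ⟨x0, hx0⟩ := hne
  obtain ⟨r, hr, hrE⟩ := Metric.isOpen_iff.1 hE x0 hx0
  have hpos : ∀ k : ℕ, 0 < r / ((k : ℝ) + 2) := fun k => by positivity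
  let φ : ℕ → ContDiffBump (0 : En n) := fun k =>
    ⟨r / ((k : ℝ) + 2) / 2, r / ((k : ℝ) + 2), half_pos (hpos k), half_lt_self (hpos k)⟩
  have h1 : ∀ k x, convolution ((φ k).normed volume) g (ContinuousLinearMap.lsmul ℝ ℝ) volume x = 1 := by
    intro k x
    rw [hconst (φ k) x x0, ContDiffBump.normed_convolution_eq_right]
    · simp [hg, hx0]
    · intro y hy
      have : y ∈ E := by
        apply hrE
        refine ball_subset_ball ?_ hy
        show r / ((k : ℝ) + 2) ≤ r
        apply div_le_self hr.le
        have : (0 : ℝ) ≤ k := Nat.cast_nonneg k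
        linarith
      simp [hg, hx0, this]
  have h2 := ContDiffBump.ae_convolution_tendsto_right_of_locallyIntegrable (φ := φ) (l := atTop)
    (K := 2) (g := g) (μ := volume) (by
      show Tendsto (fun k : ℕ => r / ((k : ℝ) + 2)) atTop (nhds 0)
      exact tendsto_const_nhds.div_atTop
        (tendsto_atTop_add_const_right _ _ tendsto_natCast_atTop_atTop))
    (Eventually.of_forall fun k => by
      show r / ((k : ℝ) + 2) ≤ 2 * (r / ((k : ℝ) + 2) / 2)
      linarith) hgi
  have h3 : ∀ᵐ x, x ∈ E := by
    filter_upwards [h2] with x hx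
    simp_rw [h1] at hx
    have h4 := tendsto_nhds_unique hx tendsto_const_nhds
    by_contra hxE
    simp [hg, hxE] at h4
  exact h3

lemma rg_c_one {u V : En n → ℝ} (hu : IsMinimizer univ u) (hV : IsMinimizer univ V)
    (hVh : ∀ t : ℝ, 0 < t → ∀ x, V (t • x) = t * V x) (hne : V ≠ 0)
    (c : ℝ) (hc : 0 < c) (hc1 : c ≤ 1) (h : ∀ x, u x = c * V x) : c = 1 := by
  by_contra hc2
  have hclt : c < 1 := lt_of_le_of_ne hc1 hc2
  obtain ⟨K, hVl⟩ := rg_hom_lip hV.2.1 hVh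
  have hue : u = fun x => c * V x := funext h
  have hul : LipschitzWith (‖c‖₊ * K) u := by
    rw [hue]; exact (lipschitzWith_smul c).comp hVl
  apply hne
  apply rg_null hV hVh
  have hEo : IsOpen {x | 0 < V x} := isOpen_lt continuous_const hVl.continuous
  have hcompl : {x | V x = 0} = {x | 0 < V x}ᶜ := by
    ext x
    exact ⟨fun hx => (not_lt.2 (le_of_eq hx)), fun hx => le_antisymm (not_lt.1 hx) (hV.1 x)⟩
  rw [hcompl]
  apply rg_full hEo
  · obtain ⟨x, hx⟩ := Function.ne_iff.1 hne
    exact ⟨x, lt_of_le_of_ne (hV.1 x) (Ne.symm hx)⟩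
  intro η hη hηc e
  obtain ⟨L, hηl⟩ := hη.lipschitzWith_of_hasCompactSupport hηc (by norm_num)
  obtain ⟨R, hR⟩ := hηc.isCompact.isBounded.subset_ball (0 : En n)
  have hR' : ∀ x, x ∉ ball (0 : En n) R → η x = 0 := fun x hx =>
    image_eq_zero_of_notMem_tsupport fun hx2 => hx (hR hx2)
  have e1 := rg_dv_eq hV hVl hη hηl R hR' e
  have e2 := rg_dv_eq hu hul hη hηl R hR' e
  have hset : {x | 0 < u x} = {x | 0 < V x} := by
    ext x
    show 0 < u x ↔ 0 < V x
    rw [h x, mul_pos_iff_of_pos_left hc]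
  have hfd : ∀ x, fderiv ℝ u x = c • fderiv ℝ V x := by
    intro x
    rw [hue]
    have hk := fderiv_const_smul_field (𝕜 := ℝ) (f := V) c
    exact congrFun hk x
  have hgr : ∀ x, gradient u x = c • gradient V x := by
    intro x
    apply ext_inner_right ℝ
    intro w
    rw [rg_inner_gradient, inner_smul_left, rg_inner_gradient, hfd]
    simp
  have hA : ∀ x, ‖gradient u x‖ ^ 2 * fderiv ℝ η x e
        - 2 * (fderiv ℝ u x e * inner ℝ (gradient u x) (gradient η x)) =
      c ^ 2 * (‖gradient V x‖ ^ 2 * fderiv ℝ η x e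
        - 2 * (fderiv ℝ V x e * inner ℝ (gradient V x) (gradient η x))) := by
    intro x
    rw [hgr, hfd, norm_smul, mul_pow, Real.norm_eq_abs, sq_abs, inner_smul_left]
    simp
    ring
  simp_rw [hA] at e2
  rw [integral_const_mul, hset] at e2
  set A := ∫ x in ball 0 R, (‖gradient V x‖ ^ 2 * fderiv ℝ η x e
        - 2 * (fderiv ℝ V x e * inner ℝ (gradient V x) (gradient η x)))
  have hA0 : A = 0 := by
    have h1 : (1 - c ^ 2) * A = 0 := by linarith
    have h2 : 1 - c ^ 2 ≠ 0 := by nlinarith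
    exact (mul_eq_zero.1 h1).resolve_left h2
  rw [hA0, zero_add] at e1
  rw [inter_comm] at e1
  refine Eq.trans ?_ e1
  apply setIntegral_eq_of_subset_of_forall_sdiff_eq_zero hEo.measurableSet inter_subset_left
  rintro x ⟨hx1, hx2⟩
  have hxb : x ∉ tsupport η := fun hx3 => hx2 ⟨hx1, hR hx3⟩
  have : fderiv ℝ η x = 0 := by
    by_contra hne2
    exact hxb (support_fderiv_subset ℝ hne2)
  rw [this]; rfl

lemma rg_main {u V : En n → ℝ} (hu : IsMinimizer univ u) (hV : IsMinimizer univ V)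
    (huh : ∀ t : ℝ, 0 < t → ∀ x, u (t • x) = t * u x)
    (hVh : ∀ t : ℝ, 0 < t → ∀ x, V (t • x) = t * V x)
    (hle : ∀ x, u x ≤ V x) (hne : u ≠ 0) : u = V := by
  obtain ⟨c, hc, hc1, h⟩ := rg_prop hu hV huh hVh hle hne
  have hVne : V ≠ 0 := by
    rintro rfl
    exact hne (funext fun x => le_antisymm (hle x) (hu.1 x))
  have := rg_c_one hu hV hVh hVne c hc hc1 h
  ext x
  rw [h x, this, one_mul]
end final


end rg_all

/-- rigidity of comparable positively 1-homogeneous global minimizers. -/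
theorem stmt12 {n : ℕ} (hn : 2 ≤ n) (U₀ : EuclideanSpace ℝ (Fin n) → ℝ)
    (hU₀min : IsMinimizer (Set.univ : Set (EuclideanSpace ℝ (Fin n))) U₀)
    (hU₀ne : U₀ ≠ 0)
    (hU₀hom : ∀ t : ℝ, 0 < t → ∀ x, U₀ (t • x) = t * U₀ x)
    (hconn : IsConnected {x | 0 < U₀ x})
    (V : EuclideanSpace ℝ (Fin n) → ℝ)
    (hV : IsMinimizer (Set.univ : Set (EuclideanSpace ℝ (Fin n))) V)
    (hVhom : ∀ t : ℝ, 0 < t → ∀ x, V (t • x) = t * V x)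
    (hcase : (∀ x, U₀ x ≤ V x) ∨ ((∀ x, V x ≤ U₀ x) ∧ V ≠ 0)) :
    V = U₀ := by
  rcases hcase with h | ⟨h, hne⟩
  · exact (rg_main hU₀min hV hU₀hom hVhom h hU₀ne).symm
  · exact rg_main hV hU₀min hVhom hU₀hom h hne
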